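/- arXiv:1609.06970 — 6 statements merged into one kernel-verified Lean document; each statement's English description precedes it below -/
import Mathlib

section
/- Let n ≥ 1 and a = (a_1,…,a_n) ∈ ℝⁿ with a_i ≥ 1 for all i. Then the anisotropic distance satisfies the triangle inequality: |x+y|_a ≤ |x|_a + |y|_a for all x, y ∈ ℝⁿ. -/
open MeasureTheory Complex
open scoped ENNReal NNReal BigOperators

noncomputable section

/-- Points of `ℝⁿ`, written `x = (x 0, …, x (n-1))`. -/
abbrev RV (n : ℕ) := Fin n → ℝ

/-- Tempered distributions `𝒮′(ℝⁿ)`. -/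
abbrev TD (n : ℕ) := SchwartzMap (RV n) ℂ →L[ℂ] ℂ

/-- The Fourier transform `𝓕g(ξ) = ∫ e^{-i x·ξ} g(x) dx`. -/
def FT (n : ℕ) (g : RV n → ℂ) (ξ : RV n) : ℂ :=
  ∫ x : RV n, Complex.exp (-Complex.I * ((∑ i, x i * ξ i : ℝ) : ℂ)) * g x

/-- The partial derivative `∂_i`. -/
def pderiv1 (n : ℕ) (i : Fin n) (g : RV n → ℂ) : RV n → ℂ :=
  fun x => fderiv ℝ g x (Pi.single i 1)

def pderivIter (n : ℕ) (i : Fin n) : ℕ → (RV n → ℂ) → RV n → ℂ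
  | 0, g => g
  | k + 1, g => pderiv1 n i (pderivIter n i k g)

/-- `D^α = (-i ∂_1)^{α_1} ⋯ (-i ∂_n)^{α_n}`. -/
def Dop (n : ℕ) (α : Fin n → ℕ) (g : RV n → ℂ) : RV n → ℂ :=
  fun x => (-Complex.I) ^ (∑ i, α i) *
    ((List.finRange n).foldr (fun i h => pderivIter n i (α i) h) g) x

/-- `anorm` is the anisotropic distance function `|·|_a` :
`anorm 0 = 0`, and for `x ≠ 0`, `anorm x` is the (unique) `t > 0` with
`x 1 ^ 2 / t ^ (2 a 1) + … + x n ^ 2 / t ^ (2 a n) = 1`. -/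
def IsAnorm (n : ℕ) (a : Fin n → ℝ) (anorm : RV n → ℝ) : Prop :=
  anorm 0 = 0 ∧
    ∀ x : RV n, x ≠ 0 → 0 < anorm x ∧ ∑ i, (x i : ℝ) ^ 2 / (anorm x) ^ (2 * a i) = 1

/-- Moment condition of order `M` : `D^α (𝓕ψ)(0) = 0` for all `|α| ≤ M` (void for `M = -1`). -/
def MomentCond (n : ℕ) (M : ℤ) (ψ : RV n → ℂ) : Prop :=
  ∀ α : Fin n → ℕ, (∑ i, (α i : ℤ)) ≤ M → Dop n α (FT n ψ) 0 = 0

/-- Tauberian conditions for `ε > 0` for the pair `(ψ0, ψ)`. -/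
def Tauber (n : ℕ) (anorm : RV n → ℝ) (ψ0 ψ : RV n → ℂ) (ε : ℝ) : Prop :=
  (∀ ξ, anorm ξ < 2 * ε → 0 < ‖FT n ψ0 ξ‖) ∧
    (∀ ξ, ε / 2 < anorm ξ → anorm ξ < 2 * ε → 0 < ‖FT n ψ ξ‖)

/-- The family `φ_j`, `φ_0` at `j = 0` and `φ_j(x) = 2^{j|a|} φ(2^{ja}x)` for `j ≥ 1`. -/
def fam (n : ℕ) (a : Fin n → ℝ) (φ0 φ : RV n → ℂ) : ℕ → RV n → ℂ
  | 0 => φ0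
  | j + 1 => fun x =>
      (((2 : ℝ) ^ (((j : ℝ) + 1) * ∑ i, a i) : ℝ) : ℂ) *
        φ (fun i => (2 : ℝ) ^ (((j : ℝ) + 1) * a i) * x i)

/-- Peetre–Fefferman–Stein maximal function attached to the function `F` (intended: `F = ψ_j * f`). -/
def pfs (n : ℕ) (a r : Fin n → ℝ) (F : RV n → ℂ) (j : ℕ) (x : RV n) : ℝ≥0∞ :=
  ⨆ y : RV n,
    ENNReal.ofReal (‖F y‖ / ∏ l, (1 + (2 : ℝ) ^ ((j : ℝ) * a l) * |x l - y l|) ^ (r l))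

/-- Iterated-integral construction of the mixed Lebesgue norm : integrate out the
coordinates one at a time, first `x 0`, last `x (n-1)`. -/
def mixAux (n : ℕ) (p : Fin n → ℝ≥0∞) : ℕ → ((RV n) → ℝ≥0∞) → (RV n) → ℝ≥0∞
  | 0, F => F
  | l + 1, F => fun x =>
      if h : l < n then
        (if p ⟨l, h⟩ = ∞ then
          essSup (fun t : ℝ => mixAux n p l F (Function.update x ⟨l, h⟩ t)) volume
        else
          (∫⁻ t : ℝ, (mixAux n p l F (Function.update x ⟨l, h⟩ t)) ^ (p ⟨l, h⟩).toReal) ^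
            (1 / (p ⟨l, h⟩).toReal))
      else mixAux n p l F x

/-- The mixed Lebesgue quasi-norm `‖F | L_{p̄}‖` of an extended-nonnegative-valued `F`. -/
def mixedNorm (n : ℕ) (p : Fin n → ℝ≥0∞) (F : RV n → ℝ≥0∞) : ℝ≥0∞ :=
  mixAux n p n F fun _ => 0

/-- `‖(u_k) | L_{p̄}(ℓ_q)‖`. -/
def seqNorm (n : ℕ) (p : Fin n → ℝ≥0∞) (q : ℝ≥0∞) (u : ℕ → RV n → ℝ≥0∞) : ℝ≥0∞ :=
  mixedNorm n p fun x =>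
    if q = ∞ then ⨆ k, u k x else (∑' k, u k x ^ q.toReal) ^ (1 / q.toReal)

/-- Convolution of (Schwartz) functions. -/
def conv2 (n : ℕ) (f g : RV n → ℂ) (x : RV n) : ℂ := ∫ y : RV n, f y * g (x - y)

/-- Schwartz seminorm `p_{α,β}(φ) = sup_x |x^α D^β φ(x)|`, valued in `[0,∞]`. -/
def pSemiE (n : ℕ) (α β : Fin n → ℕ) (g : RV n → ℂ) : ℝ≥0∞ :=
  ⨆ x : RV n, (‖((∏ i, x i ^ α i : ℝ) : ℂ) * Dop n β g x‖₊ : ℝ≥0∞)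

/-- Schwartz seminorm `q_{N,γ}(φ) = ∫ (1+|x|²)^{N/2} |D^γ φ(x)| dx`, valued in `[0,∞]`. -/
def qSemiE (n : ℕ) (N : ℝ) (γ : Fin n → ℕ) (g : RV n → ℂ) : ℝ≥0∞ :=
  ∫⁻ x : RV n, ENNReal.ofReal ((1 + ∑ i, (x i) ^ 2) ^ (N / 2)) * (‖Dop n γ g x‖₊ : ℝ≥0∞)

/-- Iterated Laplacian `Δ^N`. -/
def lapIter (n : ℕ) : ℕ → (RV n → ℂ) → RV n → ℂ
  | 0, g => g
  | N + 1, g => fun x => ∑ i, pderiv1 n i (pderiv1 n i (lapIter n N g)) x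

/-- The box `B_{R,j} = {ξ : |ξ_k| ≤ R 2^{j a_k}}`. -/
def specBox (n : ℕ) (a : Fin n → ℝ) (R : ℝ) (j : ℕ) : Set (RV n) :=
  {ξ | ∀ k, |ξ k| ≤ R * (2 : ℝ) ^ ((j : ℝ) * a k)}

/-- The spectral condition `supp 𝓕u ⊆ B_{R,j}` for a temperate-growth function `u`. -/
def SpecCond (n : ℕ) (a : Fin n → ℝ) (R : ℝ) (j : ℕ) (u : RV n → ℂ) : Prop :=
  ∀ φ : SchwartzMap (RV n) ℂ,
    tsupport (⇑φ) ∩ specBox n a R j = ∅ → (∫ x : RV n, u x * FT n (⇑φ) x) = 0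

/-- The maximal function `u^*` of Section 3. -/
def ustar (n : ℕ) (a r : Fin n → ℝ) (R : ℝ) (j : ℕ) (u : RV n → ℂ) (x : RV n) : ℝ≥0∞ :=
  ⨆ y : RV n,
    ENNReal.ofReal (‖u y‖ / ∏ l, (1 + R * (2 : ℝ) ^ ((j : ℝ) * a l) * |x l - y l|) ^ (r l))

theorem aux_term (a s t w x y : ℝ) (ha : 1 ≤ a) (hs : 0 < s) (ht : 0 < t) (hw : s + t < w) :
    (x + y) ^ 2 / w ^ (2 * a) ≤
      (s / w + t / w) * (s / w * (x ^ 2 / s ^ (2 * a)) + t / w * (y ^ 2 / t ^ (2 * a))) := by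
  have hw0 : 0 < w := by linarith
  have key : ∀ r : ℝ, 0 < r → r ^ (2 * a) = (r ^ a) ^ 2 := by
    intro r hr
    rw [mul_comm, Real.rpow_mul hr.le]
    norm_num
  have hl : ∀ r : ℝ, 0 < r → r < w → r ^ a / w ^ a ≤ r / w := by
    intro r hr hrw
    rw [← Real.div_rpow hr.le hw0.le]
    have h1 : r / w ≤ 1 := by rw [div_le_one hw0]; exact hrw.le
    calc (r / w) ^ a ≤ (r / w) ^ (1 : ℝ) :=
          Real.rpow_le_rpow_of_exponent_ge (by positivity) h1 ha
      _ = r / w := Real.rpow_one _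
  have h1 := hl s hs (by linarith)
  have h2 := hl t ht (by linarith)
  rw [key w hw0, key s hs, key t ht]
  have pS : 0 < s ^ a := Real.rpow_pos_of_pos hs a
  have pT : 0 < t ^ a := Real.rpow_pos_of_pos ht a
  have pW : 0 < w ^ a := Real.rpow_pos_of_pos hw0 a
  have hL : 0 < s / w := by positivity
  have hM : 0 < t / w := by positivity
  generalize s ^ a = S at *
  generalize t ^ a = T at *
  generalize w ^ a = W at *
  generalize s / w = L at *
  generalize t / w = M at *
  have e : (x + y) / W = S / W * (x / S) + T / W * (y / T) := by
    field_simp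
  rw [← div_pow, ← div_pow, ← div_pow, e, ← sq_abs, ← sq_abs (x / S), ← sq_abs (y / T)]
  have b : |S / W * (x / S) + T / W * (y / T)| ≤ L * |x / S| + M * |y / T| := by
    refine (abs_add_le _ _).trans ?_
    rw [abs_mul, abs_mul, abs_of_pos (div_pos pS pW), abs_of_pos (div_pos pT pW)]
    gcongr
  refine (pow_le_pow_left₀ (abs_nonneg _) b 2).trans ?_
  nlinarith [mul_nonneg (mul_pos hL hM).le (sq_nonneg (|x / S| - |y / T|))]

/-- triangle inequality for the anisotropic distance when `a ≥ 1`. -/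
theorem stmt2 (n : ℕ) (hn : 1 ≤ n) (a : Fin n → ℝ) (ha : ∀ i, 1 ≤ a i)
    (anorm : RV n → ℝ) (h : IsAnorm n a anorm) :
    ∀ x y : RV n, anorm (x + y) ≤ anorm x + anorm y := by
  intro x y
  obtain ⟨h0, h1⟩ := h
  by_cases hx : x = 0
  · simp [hx, h0]
  by_cases hy : y = 0
  · simp [hy, h0]
  obtain ⟨px, ex⟩ := h1 x hx
  obtain ⟨py, ey⟩ := h1 y hy
  by_cases hz : x + y = 0
  · rw [hz, h0]; linarith
  obtain ⟨pz, ez⟩ := h1 _ hz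
  by_contra! hlt
  have hsum := Finset.sum_le_sum (s := Finset.univ) fun i _ =>
    aux_term (a i) (anorm x) (anorm y) (anorm (x + y)) (x i) (y i) (ha i) px py hlt
  rw [← Finset.mul_sum, Finset.sum_add_distrib, ← Finset.mul_sum, ← Finset.mul_sum, ex, ey] at hsum
  simp only [Pi.add_apply] at ez
  rw [ez] at hsum
  have hq : anorm x / anorm (x + y) + anorm y / anorm (x + y) < 1 := by
    rw [← add_div, div_lt_one pz]; exact hlt
  have hp : 0 < anorm x / anorm (x + y) + anorm y / anorm (x + y) := by positivity
  nlinarith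
end
end

section
/- Let n ≥ 1 and a = (a_1,…,a_n) ∈ ℝⁿ with a_i > 0 for all i, and set d := min(1, a_1, …, a_n). Then for all x, y ∈ ℝⁿ: |x+y|_a^d ≤ |x|_a^d + |y|_a^d. -/
open MeasureTheory Complex
open scoped ENNReal NNReal BigOperators

noncomputable section

theorem aux_alg (x y A B C l m : ℝ) (hA : 0 < A) (hB : 0 < B) (hC : 0 < C)
    (hl : 0 ≤ l) (hm : 0 ≤ m) (hlm : l + m = 1) (h1 : A ≤ l * C) (h2 : B ≤ m * C) :
    (x + y) ^ 2 / C ^ 2 ≤ l * (x ^ 2 / A ^ 2) + m * (y ^ 2 / B ^ 2) := by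
  obtain ⟨u, rfl⟩ : ∃ u, x = A * u := ⟨x / A, by field_simp⟩
  obtain ⟨v, rfl⟩ : ∃ v, y = B * v := ⟨y / B, by field_simp⟩
  have e1 : (A * u) ^ 2 / A ^ 2 = u ^ 2 := by field_simp
  have e2 : (B * v) ^ 2 / B ^ 2 = v ^ 2 := by field_simp
  rw [e1, e2, div_le_iff₀ (by positivity)]
  have h3 : |A * u + B * v| ≤ C * (l * |u| + m * |v|) := by
    calc |A * u + B * v| ≤ |A * u| + |B * v| := abs_add_le _ _
      _ = A * |u| + B * |v| := by rw [abs_mul, abs_mul, abs_of_pos hA, abs_of_pos hB]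
      _ ≤ (l * C) * |u| + (m * C) * |v| := by gcongr
      _ = _ := by ring
  have h4 : (A * u + B * v) ^ 2 ≤ (C * (l * |u| + m * |v|)) ^ 2 := by
    rw [← sq_abs (A * u + B * v)]
    gcongr
  have h5 : (l * |u| + m * |v|) ^ 2 ≤ l * u ^ 2 + m * v ^ 2 := by
    rw [← sq_abs u, ← sq_abs v]
    have : m = 1 - l := by linarith
    subst this
    nlinarith [mul_nonneg (mul_nonneg hl hm) (sq_nonneg (|u| - |v|))]
  calc _ ≤ _ := h4
    _ = (l * |u| + m * |v|) ^ 2 * C ^ 2 := by ring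
    _ ≤ _ := by gcongr

theorem aux_pow (s T a d : ℝ) (hs : 0 < s) (hsT : s ≤ T) (had : d ≤ a) :
    s ^ a ≤ s ^ d / T ^ d * T ^ a := by
  have hT : 0 < T := hs.trans_le hsT
  have h := Real.rpow_le_rpow_of_exponent_ge (div_pos hs hT) ((div_le_one hT).2 hsT) had
  rw [Real.div_rpow hs.le hT.le, Real.div_rpow hs.le hT.le] at h
  rwa [div_le_iff₀ (by positivity)] at h

/-- the `d`-triangle inequality, `d = min(1, a_1, …, a_n)`. -/
theorem stmt4 (n : ℕ) (hn : 1 ≤ n) (a : Fin n → ℝ) (ha : ∀ i, 0 < a i)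
    (anorm : RV n → ℝ) (h : IsAnorm n a anorm) :
    ∀ x y : RV n,
      anorm (x + y) ^ (min 1 (⨅ i, a i)) ≤
        anorm x ^ (min 1 (⨅ i, a i)) + anorm y ^ (min 1 (⨅ i, a i)) := by
  intro x y
  haveI : Nonempty (Fin n) := ⟨⟨0, hn⟩⟩
  have hdi : ∀ i, min 1 (⨅ i, a i) ≤ a i := fun i =>
    (min_le_right _ _).trans (ciInf_le (Set.finite_range a).bddBelow i)
  have hd : 0 < min 1 (⨅ i, a i) := by
    obtain ⟨i, hi⟩ := exists_eq_ciInf_of_finite (f := a)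
    rw [← hi]
    exact lt_min one_pos (ha i)
  generalize min 1 (⨅ i, a i) = d at hd hdi
  obtain ⟨h0, hx⟩ := h
  have hnn : ∀ z, 0 ≤ anorm z := fun z => by
    by_cases hz : z = 0
    · rw [hz, h0]
    · exact (hx z hz).1.le
  by_cases hx0 : x = 0
  · subst hx0
    rw [zero_add]
    exact le_add_of_nonneg_left (Real.rpow_nonneg (hnn _) _)
  by_cases hy0 : y = 0
  · subst hy0
    rw [add_zero]
    exact le_add_of_nonneg_right (Real.rpow_nonneg (hnn _) _)
  by_cases hz0 : x + y = 0
  · rw [hz0, h0, Real.zero_rpow hd.ne']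
    exact add_nonneg (Real.rpow_nonneg (hnn _) _) (Real.rpow_nonneg (hnn _) _)
  obtain ⟨hs, hsx⟩ := hx x hx0
  obtain ⟨ht, hty⟩ := hx y hy0
  obtain ⟨hr, hrz⟩ := hx _ hz0
  generalize anorm x = s at *
  generalize anorm y = t at *
  generalize anorm (x + y) = r at *
  have hS : 0 < s ^ d + t ^ d := by positivity
  obtain ⟨T, hT, hTd⟩ : ∃ T : ℝ, 0 < T ∧ T ^ d = s ^ d + t ^ d :=
    ⟨(s ^ d + t ^ d) ^ d⁻¹, by positivity, Real.rpow_inv_rpow hS.le hd.ne'⟩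
  rw [← hTd]
  by_contra hcon
  have hTr : T < r := by
    by_contra hh
    exact hcon (Real.rpow_le_rpow hr.le (not_lt.1 hh) hd.le)
  have hsT : s ≤ T := by
    rw [← Real.rpow_le_rpow_iff hs.le hT.le hd, hTd]
    have := Real.rpow_pos_of_pos ht d
    linarith
  have htT : t ≤ T := by
    rw [← Real.rpow_le_rpow_iff ht.le hT.le hd, hTd]
    have := Real.rpow_pos_of_pos hs d
    linarith
  have hsq : ∀ w : ℝ, 0 < w → ∀ i, w ^ (2 * a i) = (w ^ a i) ^ 2 := fun w hw i => by
    rw [mul_comm, Real.rpow_mul hw.le, Real.rpow_two]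
  have hlm : s ^ d / T ^ d + t ^ d / T ^ d = 1 := by
    rw [← add_div, ← hTd, div_self (by positivity)]
  have key : ∑ i, (x i + y i) ^ 2 / T ^ (2 * a i) ≤ 1 := by
    calc ∑ i, (x i + y i) ^ 2 / T ^ (2 * a i)
        ≤ ∑ i, (s ^ d / T ^ d * (x i ^ 2 / s ^ (2 * a i))
            + t ^ d / T ^ d * (y i ^ 2 / t ^ (2 * a i))) := by
          refine Finset.sum_le_sum fun i _ => ?_
          rw [hsq T hT, hsq s hs, hsq t ht]
          exact aux_alg _ _ _ _ _ _ _ (by positivity) (by positivity) (by positivity)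
            (by positivity) (by positivity) hlm (aux_pow _ _ _ _ hs hsT (hdi i))
            (aux_pow _ _ _ _ ht htT (hdi i))
      _ = 1 := by
          rw [Finset.sum_add_distrib, ← Finset.mul_sum, ← Finset.mul_sum, hsx, hty, mul_one,
            mul_one, hlm]
  have hlt : ∀ i, T ^ (2 * a i) < r ^ (2 * a i) := fun i =>
    Real.rpow_lt_rpow hT.le hTr (mul_pos two_pos (ha i))
  have strict : ∑ i, ((x + y) i) ^ 2 / r ^ (2 * a i) < ∑ i, (x i + y i) ^ 2 / T ^ (2 * a i) := by
    obtain ⟨j, hj⟩ := Function.ne_iff.1 hz0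
    refine Finset.sum_lt_sum (fun i _ => ?_) ⟨j, Finset.mem_univ j, ?_⟩
    · exact div_le_div_of_nonneg_left (sq_nonneg _) (by positivity) (hlt i).le
    · exact div_lt_div_of_pos_left (sq_pos_of_ne_zero hj) (by positivity) (hlt j)
  linarith
end
end

section
/- Let n ≥ 1 and a = (a_1,…,a_n) ∈ ℝⁿ with a_i > 0 for all i. Then the map x ↦ |x|_a is infinitely differentiable (C^∞) on ℝⁿ ∖ {0}. -/
open MeasureTheory Complex
open scoped ENNReal NNReal BigOperators

noncomputable section

/-- The defining function in logarithmic coordinates. -/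
def aF (n : ℕ) (a : Fin n → ℝ) (p : RV n × ℝ) : ℝ :=
  ∑ i, (p.1 i) ^ 2 * Real.exp (-(2 * a i) * p.2)

theorem aF_contDiff (n : ℕ) (a : Fin n → ℝ) : ContDiff ℝ (⊤ : ℕ∞) (aF n a) := by
  unfold aF
  fun_prop

theorem aF_strictAnti (n : ℕ) (a : Fin n → ℝ) (ha : ∀ i, 0 < a i) (x : RV n) (hx : x ≠ 0) :
    StrictAnti (fun s : ℝ => aF n a (x, s)) := by
  intro s t hst
  obtain ⟨j, hj⟩ := Function.ne_iff.mp hx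
  have hj : x j ≠ 0 := hj
  unfold aF
  apply Finset.sum_lt_sum
  · intro i _
    have : Real.exp (-(2 * a i) * t) ≤ Real.exp (-(2 * a i) * s) :=
      Real.exp_le_exp.mpr (by nlinarith [ha i])
    exact mul_le_mul_of_nonneg_left this (sq_nonneg _)
  · refine ⟨j, Finset.mem_univ _, ?_⟩
    have : Real.exp (-(2 * a j) * t) < Real.exp (-(2 * a j) * s) :=
      Real.exp_lt_exp.mpr (by nlinarith [ha j])
    exact mul_lt_mul_of_pos_left this (by positivity)

theorem aF_deriv (n : ℕ) (a : Fin n → ℝ) (ha : ∀ i, 0 < a i) (x : RV n) (hx : x ≠ 0) (s : ℝ) :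
    fderiv ℝ (aF n a) (x, s) (0, 1) ≠ 0 := by
  have h1 : HasFDerivAt (aF n a) (fderiv ℝ (aF n a) (x, s)) (x, s) :=
    ((aF_contDiff n a).differentiable (by simp) _).hasFDerivAt
  have h2 : HasDerivAt (fun s : ℝ => (x, s)) ((0 : RV n), (1 : ℝ)) s :=
    (hasDerivAt_const s x).prodMk (hasDerivAt_id s)
  have h3 := h1.comp_hasDerivAt s h2
  have h4 : HasDerivAt (fun s : ℝ => aF n a (x, s))
      (∑ i, (x i) ^ 2 * (Real.exp (-(2 * a i) * s) * (-(2 * a i) * 1))) s := by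
    unfold aF
    refine HasDerivAt.fun_sum fun i _ => ?_
    exact (((hasDerivAt_id s).const_mul (-(2 * a i))).exp).const_mul ((x i) ^ 2)
  rw [h3.unique h4]
  obtain ⟨j, hj⟩ := Function.ne_iff.mp hx
  have hj : x j ≠ 0 := hj
  apply ne_of_lt
  apply Finset.sum_neg' 
  · intro i _
    have := mul_nonneg (mul_nonneg (sq_nonneg (x i)) (Real.exp_pos (-(2 * a i) * s)).le) (ha i).le
    nlinarith
  · refine ⟨j, Finset.mem_univ _, ?_⟩
    have : 0 < (x j) ^ 2 * Real.exp (-(2 * a j) * s) * a j := by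
      have := ha j
      positivity
    nlinarith

/-- `x ↦ |x|_a` is `C^∞` on `ℝⁿ ∖ {0}`. -/
theorem stmt5 (n : ℕ) (hn : 1 ≤ n) (a : Fin n → ℝ) (ha : ∀ i, 0 < a i)
    (anorm : RV n → ℝ) (h : IsAnorm n a anorm) :
    ContDiffOn ℝ (⊤ : ℕ∞) anorm {x : RV n | x ≠ 0} := by
  have key : ∀ x : RV n, x ≠ 0 → aF n a (x, Real.log (anorm x)) = 1 := by
    intro x hx
    obtain ⟨hp, he⟩ := h.2 x hx
    rw [← he]
    unfold aF
    refine Finset.sum_congr rfl fun i _ => ?_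
    rw [Real.rpow_def_of_pos hp, div_eq_mul_inv, ← Real.exp_neg]
    congr 2
    ring
  intro x hx
  have hx : x ≠ 0 := hx
  apply ContDiffAt.contDiffWithinAt
  have cdf : ContDiffAt ℝ (⊤ : ℕ∞) (aF n a) (x, Real.log (anorm x)) :=
    (aF_contDiff n a).contDiffAt
  have pn : ((⊤ : ℕ∞) : WithTop ℕ∞) ≠ 0 := by simp
  have hinv : (fderiv ℝ (aF n a) (x, Real.log (anorm x)) ∘L
      ContinuousLinearMap.inr ℝ (RV n) ℝ).IsInvertible := by
    refine ⟨ContinuousLinearEquiv.unitsEquivAut ℝ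
      (Units.mk0 _ (aF_deriv n a ha x hx (Real.log (anorm x)))), ?_⟩
    ext
    simp
  have hc := (cdf.contDiffAt_implicitFunction pn hinv)
  have he := cdf.eventually_apply_implicitFunction pn hinv
  refine (hc.exp).congr_of_eventuallyEq ?_
  have hne : ∀ᶠ y in nhds x, y ≠ 0 := isOpen_ne.mem_nhds hx
  filter_upwards [he, hne] with y hy hy0
  rw [key x hx, ← key y hy0] at hy
  rw [(aF_strictAnti n a ha y hy0).injective hy, Real.exp_log (h.2 y hy0).1]
end
end

section
/- Let (b_j)_{j≥0} and (d_j)_{j≥0} be two sequences in [0,∞], let 0 < r ≤ 1 and let j_0 ≥ 0 be an integer. Assume: (i) there exist real numbers C, N_0 > 0 such that d_j ≤ C·2^{jN_0} for all j ≥ j_0; and (ii) for every N > 0 there exists a real number C_N such that d_j ≤ C_N · ∑_{k=j}^∞ 2^{(j−k)N} b_k d_k^{1−r} for all j ≥ j_0. Then, with the same constants C_N, for every N > 0 and every j ≥ j_0: d_j^r ≤ C_N · ∑_{k=j}^∞ 2^{(j−k)Nr} b_k. -/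
open MeasureTheory Complex
open scoped ENNReal NNReal BigOperators

noncomputable section

def w7 (x : ℝ) : ℝ≥0∞ := ENNReal.ofReal ((2:ℝ) ^ x)

lemma w7_add (x y : ℝ) : w7 (x + y) = w7 x * w7 y := by
  unfold w7
  rw [Real.rpow_add (by norm_num), ENNReal.ofReal_mul (by positivity)]

lemma w7_rpow (x r : ℝ) (hr : 0 ≤ r) : w7 (x * r) = w7 x ^ r := by
  unfold w7
  rw [Real.rpow_mul (by norm_num), ENNReal.ofReal_rpow_of_nonneg (by positivity) hr]

lemma w7_mono {x y : ℝ} (h : x ≤ y) : w7 x ≤ w7 y :=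
  ENNReal.ofReal_le_ofReal (Real.rpow_le_rpow_of_exponent_le (by norm_num) h)

lemma w7_zero : w7 0 = 1 := by simp [w7]

lemma key7 (b d : ℕ → ℝ≥0∞) (r : ℝ) (hr0 : 0 < r) (hr1 : r ≤ 1) (j : ℕ) (A : ℝ≥0∞)
    (N : ℝ)
    (h2 : ∀ k, j ≤ k → d k ≤ A *
        ∑' l : ℕ, if k ≤ l then w7 (((k:ℝ) - (l:ℝ)) * N) * b l * d l ^ (1 - r) else 0)
    (B : ℝ≥0∞) (hB : B ≠ ⊤) (hd : ∀ k, j ≤ k → w7 (((j:ℝ) - k) * N) * d k ≤ B) :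
    d j ^ r ≤ A * ∑' k : ℕ, if j ≤ k then w7 (((j:ℝ) - (k:ℝ)) * N * r) * b k else 0 := by
  set S := ∑' k : ℕ, if j ≤ k then w7 (((j:ℝ) - (k:ℝ)) * N * r) * b k else 0 with hS
  set D : ℝ≥0∞ := ⨆ k : {k : ℕ // j ≤ k}, w7 (((j:ℝ) - (k:ℕ)) * N) * d k with hD
  have hle : ∀ k, j ≤ k → w7 (((j:ℝ) - k) * N) * d k ≤ D := fun k hk =>
    le_iSup (fun k : {k : ℕ // j ≤ k} => w7 (((j:ℝ) - (k:ℕ)) * N) * d k) ⟨k, hk⟩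
  have hDt : D ≠ ⊤ := ne_top_of_le_ne_top hB (iSup_le fun k => hd k k.2)
  have hdj : d j ≤ D := by simpa [w7_zero] using hle j le_rfl
  have hr1' : 0 ≤ 1 - r := by linarith
  have hmain : D ≤ A * S * D ^ (1 - r) := by
    refine iSup_le fun ⟨k, hk⟩ => ?_
    calc w7 (((j:ℝ) - k) * N) * d k
        ≤ w7 (((j:ℝ) - k) * N) * (A *
        ∑' l : ℕ, if k ≤ l then w7 (((k:ℝ) - (l:ℝ)) * N) * b l * d l ^ (1 - r) else 0) := by
          gcongr; exact h2 k hk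
      _ = A * ∑' l : ℕ, w7 (((j:ℝ) - k) * N) *
          (if k ≤ l then w7 (((k:ℝ) - (l:ℝ)) * N) * b l * d l ^ (1 - r) else 0) := by
          rw [ENNReal.tsum_mul_left]; ring
      _ ≤ A * ∑' l : ℕ, (if j ≤ l then w7 (((j:ℝ) - (l:ℝ)) * N * r) * b l else 0)
            * D ^ (1 - r) := by
          refine mul_le_mul' le_rfl (ENNReal.tsum_le_tsum fun l => ?_)
          by_cases hl : k ≤ l
          · have hjl : j ≤ l := hk.trans hl
            simp only [hl, hjl, if_true]
            have e1 : w7 (((j:ℝ) - k) * N) * w7 (((k:ℝ) - l) * N)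
                = w7 (((j:ℝ) - l) * N * r) * w7 (((j:ℝ) - l) * N) ^ (1 - r) := by
              rw [← w7_rpow _ _ hr1', ← w7_add, ← w7_add]; congr 1; ring
            calc _ = (w7 (((j:ℝ) - k) * N) * w7 (((k:ℝ) - l) * N)) * b l * d l ^ (1 - r) := by
                  ring
              _ = w7 (((j:ℝ) - l) * N * r) * b l * (w7 (((j:ℝ) - l) * N) * d l) ^ (1 - r) := by
                  rw [e1, ENNReal.mul_rpow_of_nonneg _ _ hr1']; ring
              _ ≤ _ := mul_le_mul' le_rfl (ENNReal.rpow_le_rpow (hle l hjl) hr1')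
          · simp [hl]
      _ = A * S * D ^ (1 - r) := by rw [ENNReal.tsum_mul_right, mul_assoc]
  have hfin : D ^ r ≤ A * S := by
    by_cases h0 : D = 0
    · rw [h0, ENNReal.zero_rpow_of_pos hr0]; exact zero_le
    · have hp0 : D ^ (1 - r) ≠ 0 := by
        simp [ENNReal.rpow_eq_zero_iff, h0, hDt]
      have hpt : D ^ (1 - r) ≠ ⊤ := ENNReal.rpow_ne_top_of_nonneg hr1' hDt
      have e : D ^ r * D ^ (1 - r) = D := by
        rw [← ENNReal.rpow_add _ _ h0 hDt]; simp
      rw [← ENNReal.mul_le_mul_iff_left hp0 hpt, e]; exact hmain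
  exact (ENNReal.rpow_le_rpow hdj hr0.le).trans hfin

/-- the summation Lemma 2.8 (Lemma `sum2-lem`). -/
theorem stmt7 (b d : ℕ → ℝ≥0∞) (r : ℝ) (hr0 : 0 < r) (hr1 : r ≤ 1) (j0 : ℕ)
    (C N0 : ℝ) (hC : 0 < C) (hN0 : 0 < N0)
    (h1 : ∀ j, j0 ≤ j → d j ≤ ENNReal.ofReal (C * (2:ℝ) ^ ((j:ℝ) * N0)))
    (CN : ℝ → ℝ)
    (h2 : ∀ N : ℝ, 0 < N → ∀ j, j0 ≤ j →
      d j ≤ ENNReal.ofReal (CN N) *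
        ∑' k : ℕ, if j ≤ k then
          ENNReal.ofReal ((2:ℝ) ^ (((j:ℝ) - (k:ℝ)) * N)) * b k * d k ^ (1 - r) else 0) :
    ∀ N : ℝ, 0 < N → ∀ j, j0 ≤ j →
      d j ^ r ≤ ENNReal.ofReal (CN N) *
        ∑' k : ℕ, if j ≤ k then
          ENNReal.ofReal ((2:ℝ) ^ (((j:ℝ) - (k:ℝ)) * N * r)) * b k else 0 := by
  have big : ∀ N : ℝ, 0 < N → N0 ≤ N → ∀ j, j0 ≤ j →
      d j ^ r ≤ ENNReal.ofReal (CN N) *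
        ∑' k : ℕ, if j ≤ k then w7 (((j:ℝ) - (k:ℝ)) * N * r) * b k else 0 := by
    intro N hN hNN j hj
    refine key7 b d r hr0 hr1 j _ N (fun k hk => h2 N hN k (hj.trans hk))
      (ENNReal.ofReal C * w7 ((j:ℝ) * N)) (by simp [w7, ENNReal.mul_eq_top]) ?_
    intro k hk
    calc w7 (((j:ℝ) - k) * N) * d k
        ≤ w7 (((j:ℝ) - k) * N) * (ENNReal.ofReal C * w7 ((k:ℝ) * N0)) := by
          gcongr
          refine (h1 k (hj.trans hk)).trans (le_of_eq ?_)
          rw [ENNReal.ofReal_mul hC.le]; rfl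
      _ = ENNReal.ofReal C * w7 (((j:ℝ) - k) * N + (k:ℝ) * N0) := by
          rw [w7_add]; ring
      _ ≤ _ := by
          gcongr
          apply w7_mono
          nlinarith [mul_le_mul_of_nonneg_left hNN (Nat.cast_nonneg (α := ℝ) k)]
  intro N hN j hj
  by_cases hNN : N0 ≤ N
  · exact big N hN hNN j hj
  push Not at hNN
  change d j ^ r ≤ ENNReal.ofReal (CN N) *
        ∑' k : ℕ, if j ≤ k then w7 (((j:ℝ) - (k:ℝ)) * N * r) * b k else 0
  set S := ∑' k : ℕ, if j ≤ k then w7 (((j:ℝ) - (k:ℝ)) * N * r) * b k else 0 with hS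
  by_cases hA : ENNReal.ofReal (CN N) = 0
  · have h := h2 N hN j hj
    rw [hA, zero_mul] at h
    rw [nonpos_iff_eq_zero.mp h, ENNReal.zero_rpow_of_pos hr0]; exact zero_le
  by_cases hSt : S = ⊤
  · rw [hSt, ENNReal.mul_top hA]; exact le_top
  refine key7 b d r hr0 hr1 j _ N (fun k hk => h2 N hN k (hj.trans hk))
    ((ENNReal.ofReal (CN N0) * S) ^ (1 / r))
    (ENNReal.rpow_ne_top_of_nonneg (by positivity) (ENNReal.mul_ne_top (by simp) hSt)) ?_
  intro k hk
  rw [one_div, ENNReal.le_rpow_inv_iff hr0, ENNReal.mul_rpow_of_nonneg _ _ hr0.le,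
    ← w7_rpow _ _ hr0.le]
  calc w7 (((j:ℝ) - k) * N * r) * d k ^ r
      ≤ w7 (((j:ℝ) - k) * N * r) * (ENNReal.ofReal (CN N0) *
        ∑' l : ℕ, if k ≤ l then w7 (((k:ℝ) - (l:ℝ)) * N0 * r) * b l else 0) := by
        gcongr; exact big N0 hN0 le_rfl k (hj.trans hk)
    _ = ENNReal.ofReal (CN N0) * ∑' l : ℕ, w7 (((j:ℝ) - k) * N * r) *
        (if k ≤ l then w7 (((k:ℝ) - (l:ℝ)) * N0 * r) * b l else 0) := by
        rw [ENNReal.tsum_mul_left]; ring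
    _ ≤ _ := by
        rw [hS]
        refine mul_le_mul' le_rfl (ENNReal.tsum_le_tsum fun l => ?_)
        by_cases hl : k ≤ l
        · have hjl : j ≤ l := hk.trans hl
          simp only [hl, hjl, if_true]
          rw [← mul_assoc, ← w7_add]
          gcongr
          apply w7_mono
          have hkl : (k:ℝ) ≤ l := by exact_mod_cast hl
          have := mul_nonneg (mul_nonneg (sub_nonneg.mpr hkl) (sub_nonneg.mpr hNN.le)) hr0.le
          nlinarith
        · simp [hl]
end
end

section
/- Let ψ_0, ψ ∈ 𝒮(ℝⁿ) satisfy the Tauberian conditions for some ε > 0. Then there exist λ_0, λ ∈ 𝒮(ℝⁿ) with supp 𝓕λ_0 ⊆ {ξ : |ξ|_a < 2ε} and supp 𝓕λ ⊆ {ξ : ε/2 < |ξ|_a < 2ε}, such that for every ξ ∈ ℝⁿ, 𝓕λ_0(ξ)·𝓕ψ_0(ξ) + ∑_{j=1}^∞ 𝓕λ(2^{−ja}ξ)·𝓕ψ(2^{−ja}ξ) = 1, where for each fixed ξ only finitely many terms of the series are nonzero. -/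
open MeasureTheory Complex
open scoped ENNReal NNReal BigOperators

noncomputable section

open scoped ContDiff FourierTransform
open Filter Topology

def aq8 (n : ℕ) (a : Fin n → ℝ) (t : ℝ) (x : RV n) : ℝ := ∑ i, (x i) ^ 2 / t ^ (2 * a i)

def dil8 (n : ℕ) (a : Fin n → ℝ) (k : ℝ) (x : RV n) : RV n := fun i => (2:ℝ) ^ (k * a i) * x i

theorem aq8_dil (n : ℕ) (a : Fin n → ℝ) (t : ℝ) (ht : 0 < t) (k : ℝ) (x : RV n) :
    aq8 n a t (dil8 n a k x) = aq8 n a (t * 2 ^ (-k)) x := by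
  unfold aq8 dil8
  refine Finset.sum_congr rfl fun i _ => ?_
  rw [Real.mul_rpow ht.le (by positivity), ← Real.rpow_mul (by norm_num), mul_pow,
    ← Real.rpow_natCast ((2:ℝ) ^ (k * a i)), ← Real.rpow_mul (by norm_num)]
  have : -k * (2 * a i) = -(k * a i * ((2:ℕ):ℝ)) := by push_cast; ring
  rw [this, Real.rpow_neg (by norm_num)]
  have h1 : (0:ℝ) < 2 ^ (k * a i * ((2:ℕ):ℝ)) := by positivity
  have h2 : 0 < t ^ (2 * a i) := by positivity
  field_simp

theorem aq8_anti (n : ℕ) (a : Fin n → ℝ) (ha : ∀ i, 1 ≤ a i) (s t : ℝ) (hs : 0 < s)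
    (hst : s ≤ t) (x : RV n) : aq8 n a t x ≤ aq8 n a s x := by
  unfold aq8
  refine Finset.sum_le_sum fun i _ => ?_
  have := ha i
  exact div_le_div_of_nonneg_left (sq_nonneg _) (by positivity)
    (Real.rpow_le_rpow hs.le hst (by linarith))

theorem aq8_anti_strict (n : ℕ) (a : Fin n → ℝ) (ha : ∀ i, 1 ≤ a i) (s t : ℝ) (hs : 0 < s)
    (hst : s < t) (x : RV n) (hx : x ≠ 0) : aq8 n a t x < aq8 n a s x := by
  unfold aq8
  obtain ⟨i, hi⟩ := Function.ne_iff.1 hx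
  refine Finset.sum_lt_sum (fun i _ => ?_) ⟨i, Finset.mem_univ i, ?_⟩
  · have := ha i
    exact div_le_div_of_nonneg_left (sq_nonneg _) (by positivity)
      (Real.rpow_le_rpow hs.le hst.le (by linarith))
  · have := ha i
    have h0 : 0 < (x i) ^ 2 := by
      have : x i ≠ 0 := hi
      positivity
    exact div_lt_div_of_pos_left h0 (by positivity)
      (Real.rpow_lt_rpow hs.le hst (by linarith))

theorem aq8_zero (n : ℕ) (a : Fin n → ℝ) (t : ℝ) : aq8 n a t 0 = 0 := by simp [aq8]

theorem aq8_cont (n : ℕ) (a : Fin n → ℝ) (t : ℝ) : Continuous (aq8 n a t) := by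
  unfold aq8
  refine continuous_finsetSum _ fun i _ => ?_
  exact ((continuous_apply i).pow 2).div_const _

theorem anorm8_le (n : ℕ) (a : Fin n → ℝ) (ha : ∀ i, 1 ≤ a i) (anorm : RV n → ℝ)
    (h : IsAnorm n a anorm) (t : ℝ) (ht : 0 < t) (x : RV n) (hx : aq8 n a t x ≤ 1) :
    anorm x ≤ t := by
  by_cases h0 : x = 0
  · rw [h0, h.1]; exact ht.le
  · obtain ⟨_, h2⟩ := h.2 x h0
    by_contra! hc
    have := aq8_anti_strict n a ha t (anorm x) ht hc x h0
    unfold aq8 at this hx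
    linarith

theorem anorm8_ge (n : ℕ) (a : Fin n → ℝ) (ha : ∀ i, 1 ≤ a i) (anorm : RV n → ℝ)
    (h : IsAnorm n a anorm) (t : ℝ) (x : RV n) (hx : 1 ≤ aq8 n a t x) :
    t ≤ anorm x := by
  by_cases h0 : x = 0
  · rw [h0, aq8_zero] at hx; norm_num at hx
  · obtain ⟨h1, h2⟩ := h.2 x h0
    by_contra! hc
    have := aq8_anti_strict n a ha (anorm x) t h1 hc x h0
    unfold aq8 at this hx
    linarith

theorem dil8_tendsto (n : ℕ) (a : Fin n → ℝ) (ha : ∀ i, 1 ≤ a i) (x : RV n) :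
    Tendsto (fun j : ℕ => dil8 n a (-(j:ℝ)) x) atTop (𝓝 0) := by
  rw [tendsto_pi_nhds]
  intro i
  have h1 : Tendsto (fun j : ℕ => ((2:ℝ) ^ (-(a i))) ^ j * x i) atTop (𝓝 (0 * x i)) := by
    refine Tendsto.mul_const _ (tendsto_pow_atTop_nhds_zero_of_lt_one (by positivity) ?_)
    exact Real.rpow_lt_one_of_one_lt_of_neg (by norm_num) (by linarith [ha i])
  rw [zero_mul] at h1
  refine h1.congr fun j => ?_
  unfold dil8
  rw [← Real.rpow_natCast, ← Real.rpow_mul (by norm_num)]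
  congr 2
  ring

theorem aq8_compact (n : ℕ) (a : Fin n → ℝ) (t : ℝ) (ht : 0 < t) :
    IsCompact {x | aq8 n a t x ≤ 1} := by
  refine IsCompact.of_isClosed_subset
    (isCompact_Icc (a := fun i => -(t ^ (a i))) (b := fun i => t ^ (a i)))
    (isClosed_le (aq8_cont n a t) continuous_const) ?_
  intro x hx
  have key : ∀ i, -(t ^ (a i)) ≤ x i ∧ x i ≤ t ^ (a i) := by
    intro i
    have h1 : (x i) ^ 2 / t ^ (2 * a i) ≤ 1 := by
      refine le_trans ?_ hx
      exact Finset.single_le_sum (f := fun i => (x i) ^ 2 / t ^ (2 * a i))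
        (fun i _ => by positivity) (Finset.mem_univ i)
    rw [div_le_one (by positivity), mul_comm, Real.rpow_mul ht.le] at h1
    have h2 : (x i) ^ 2 ≤ (t ^ (a i)) ^ 2 := by exact_mod_cast h1
    exact abs_le.1 (abs_le_of_sq_le_sq h2 (by positivity))
  exact ⟨fun i => (key i).1, fun i => (key i).2⟩

def eqv8 (n : ℕ) : EuclideanSpace ℝ (Fin n) ≃L[ℝ] RV n :=
  PiLp.continuousLinearEquiv 2 ℝ (fun _ : Fin n => ℝ)

theorem FT8_eq (n : ℕ) (g : RV n → ℂ) (ξ : RV n) :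
    FT n g ξ = 𝓕 (g ∘ eqv8 n) ((eqv8 n).symm ((2 * Real.pi)⁻¹ • ξ)) := by
  rw [Real.fourier_eq']
  unfold FT
  rw [← (PiLp.volume_preserving_toLp (Fin n)).integral_comp
    (MeasurableEquiv.toLp 2 (Fin n → ℝ)).measurableEmbedding]
  refine integral_congr_ae (Eventually.of_forall fun x => ?_)
  simp only [smul_eq_mul]
  congr 1
  congr 1
  have : inner ℝ (WithLp.toLp 2 x : EuclideanSpace ℝ (Fin n))
      ((eqv8 n).symm ((2 * Real.pi)⁻¹ • ξ)) = (2 * Real.pi)⁻¹ * ∑ i, x i * ξ i := by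
    rw [PiLp.inner_apply, Finset.mul_sum]
    refine Finset.sum_congr rfl fun i _ => ?_
    simp [eqv8]
    ring
  rw [this]
  have hp : Real.pi ≠ 0 := Real.pi_ne_zero
  have : -2 * Real.pi * ((2 * Real.pi)⁻¹ * ∑ i, x i * ξ i) = - ∑ i, x i * ξ i := by
    field_simp
  rw [this]
  push_cast
  ring

theorem FT8_smooth (n : ℕ) (g : SchwartzMap (RV n) ℂ) : ContDiff ℝ ∞ (FT n g) := by
  have h : FT n g = fun ξ => (𝓕 (SchwartzMap.compCLMOfContinuousLinearEquiv ℂ (eqv8 n) g))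
      ((eqv8 n).symm ((2 * Real.pi)⁻¹ • ξ)) := by
    funext ξ
    rw [FT8_eq, SchwartzMap.fourier_coe]
    rfl
  rw [h]
  refine (SchwartzMap.smooth _ ⊤).comp ?_
  exact (eqv8 n).symm.contDiff.comp (contDiff_const_smul _)

theorem FT8_surj (n : ℕ) (G : RV n → ℂ) (hG : ContDiff ℝ ∞ G) (hc : HasCompactSupport G) :
    ∃ lam : SchwartzMap (RV n) ℂ, FT n lam = G := by
  let S : SchwartzMap (RV n) ℂ := hc.toSchwartzMap hG
  have h2 : (2 * Real.pi) ≠ 0 := by positivity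
  let e : EuclideanSpace ℝ (Fin n) ≃L[ℝ] RV n :=
    (eqv8 n).trans (ContinuousLinearEquiv.smulLeft (Units.mk0 (2 * Real.pi) h2))
  let T : SchwartzMap (EuclideanSpace ℝ (Fin n)) ℂ :=
    SchwartzMap.compCLMOfContinuousLinearEquiv ℂ e S
  refine ⟨SchwartzMap.compCLMOfContinuousLinearEquiv ℂ (eqv8 n).symm (𝓕⁻ T), ?_⟩
  funext ξ
  rw [FT8_eq]
  have : (⇑(SchwartzMap.compCLMOfContinuousLinearEquiv ℂ (eqv8 n).symm (𝓕⁻ T))) ∘ (eqv8 n)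
      = ⇑(𝓕⁻ T : SchwartzMap (EuclideanSpace ℝ (Fin n)) ℂ) := by
    funext x
    simp
  rw [this, ← SchwartzMap.fourier_coe, FourierTransform.fourier_fourierInv_eq]
  change G (e _) = G ξ
  congr 1
  change (2 * Real.pi) • (eqv8 n) ((eqv8 n).symm ((2 * Real.pi)⁻¹ • ξ)) = ξ
  rw [ContinuousLinearEquiv.apply_symm_apply, smul_inv_smul₀ h2]

theorem FT8_div (n : ℕ) (ψ : SchwartzMap (RV n) ℂ) (Θ : RV n → ℂ) (hΘ : ContDiff ℝ ∞ Θ)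
    (hc : HasCompactSupport Θ) (hne : ∀ x ∈ tsupport Θ, FT n ψ x ≠ 0) :
    ∃ lam : SchwartzMap (RV n) ℂ, tsupport (FT n lam) ⊆ tsupport Θ ∧
      ∀ x, FT n lam x * FT n ψ x = Θ x := by
  have hs : Function.support (fun x => Θ x / FT n ψ x) ⊆ Function.support Θ := by
    intro x hx h0
    exact hx (by simp [h0])
  obtain ⟨lam, hl⟩ := FT8_surj n (fun x => Θ x / FT n ψ x) (by
    rw [contDiff_iff_contDiffAt]
    intro x
    by_cases hx : x ∈ tsupport Θ
    · simp only [div_eq_mul_inv]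
      exact hΘ.contDiffAt.mul ((FT8_smooth n ψ).contDiffAt.inv (hne x hx))
    · refine (contDiffAt_const (c := (0:ℂ))).congr_of_eventuallyEq ?_
      filter_upwards [notMem_tsupport_iff_eventuallyEq.1 hx] with y hy
      simp [hy]) (hc.mono hs)
  refine ⟨lam, ?_, fun x => ?_⟩
  · rw [hl]; exact closure_mono hs
  · rw [hl]
    by_cases hx : x ∈ tsupport Θ
    · exact div_mul_cancel₀ _ (hne x hx)
    · have : Θ x = 0 := image_eq_zero_of_notMem_tsupport hx
      simp [this]

/-- Calderón's reproducing formula on the Fourier side (Lemma 3.3). -/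
theorem stmt8 (n : ℕ) (hn : 1 ≤ n) (a : Fin n → ℝ) (ha : ∀ i, 1 ≤ a i)
    (anorm : RV n → ℝ) (h : IsAnorm n a anorm)
    (ψ0 ψ : SchwartzMap (RV n) ℂ) (ε : ℝ) (hε : 0 < ε)
    (hT : Tauber n anorm (⇑ψ0) (⇑ψ) ε) :
    ∃ lam0 lam : SchwartzMap (RV n) ℂ,
      tsupport (FT n ⇑lam0) ⊆ {ξ : RV n | anorm ξ < 2 * ε} ∧
      tsupport (FT n ⇑lam) ⊆ {ξ : RV n | ε / 2 < anorm ξ ∧ anorm ξ < 2 * ε} ∧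
      ∀ ξ : RV n,
        {j : ℕ |
          FT n (⇑lam) (fun i => (2:ℝ) ^ (-((j:ℝ) + 1) * a i) * ξ i) *
            FT n (⇑ψ) (fun i => (2:ℝ) ^ (-((j:ℝ) + 1) * a i) * ξ i) ≠ 0}.Finite ∧
        FT n (⇑lam0) ξ * FT n (⇑ψ0) ξ +
          ∑' j : ℕ,
            FT n (⇑lam) (fun i => (2:ℝ) ^ (-((j:ℝ) + 1) * a i) * ξ i) *
              FT n (⇑ψ) (fun i => (2:ℝ) ^ (-((j:ℝ) + 1) * a i) * ξ i) = 1 := by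
  obtain ⟨r, hr⟩ : ∃ r, r = 5 / 4 * ε := ⟨_, rfl⟩
  obtain ⟨R, hR⟩ : ∃ R, R = 7 / 4 * ε := ⟨_, rfl⟩
  have hr0 : 0 < r := by rw [hr]; positivity
  have hR0 : 0 < R := by rw [hR]; positivity
  have hrR : r < R := by rw [hr, hR]; linarith
  have hsub : {x | aq8 n a r x ≤ 1} ⊆ {x | aq8 n a R x < 1} := by
    intro x hx
    by_cases h0 : x = 0
    · simp [h0, aq8_zero]
    · exact lt_of_lt_of_le (aq8_anti_strict n a ha r R hr0 hrR x h0) hx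
  obtain ⟨φ, hφ, -, hφs, hφ1⟩ := exists_contMDiff_support_eq_eq_one_iff (n := ⊤)
    (modelWithCornersSelf ℝ (RV n)) (isOpen_lt (aq8_cont n a R) continuous_const)
    (isClosed_le (aq8_cont n a r) continuous_const) hsub
  rw [contMDiff_iff_contDiff] at hφ
  have hφ0 : ∀ x, φ x ≠ 0 → aq8 n a R x < 1 := fun x hx => by
    have : x ∈ Function.support φ := hx
    rw [hφs] at this
    exact this
  have hφ1' : ∀ x, aq8 n a r x ≤ 1 → φ x = 1 := fun x hx => (hφ1 x).1 hx
  -- the two cutoffs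
  let Φ : RV n → ℂ := fun x => (φ x : ℂ)
  have hΦ : ContDiff ℝ ∞ Φ := Complex.ofRealCLM.contDiff.comp hφ
  let Θ : RV n → ℂ := fun x => Φ x - Φ (dil8 n a 1 x)
  have hdil : ContDiff ℝ ∞ (dil8 n a 1) := by
    rw [contDiff_pi]
    intro i
    exact contDiff_const.mul (contDiff_apply ℝ ℝ i)
  have hΘ : ContDiff ℝ ∞ Θ := hΦ.sub (hΦ.comp hdil)
  have hΦ0 : ∀ x, Φ x ≠ 0 → aq8 n a R x < 1 := fun x hx => hφ0 x (by simpa [Φ] using hx)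
  have hΦ1 : ∀ x, aq8 n a r x ≤ 1 → Φ x = 1 := fun x hx => by simp [Φ, hφ1' x hx]
  have hΦs : tsupport Φ ⊆ {x | aq8 n a R x ≤ 1} :=
    closure_minimal (fun x hx => (hΦ0 x hx).le) (isClosed_le (aq8_cont n a R) continuous_const)
  have hΘs : tsupport Θ ⊆ {x | 1 ≤ aq8 n a (r / 2) x ∧ aq8 n a R x ≤ 1} := by
    refine closure_minimal (fun x hx => ?_)
      ((isClosed_le continuous_const (aq8_cont n a (r/2))).inter
        (isClosed_le (aq8_cont n a R) continuous_const))
    have hd : ∀ t, 0 < t → aq8 n a t (dil8 n a 1 x) = aq8 n a (t / 2) x := by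
      intro t ht
      rw [aq8_dil n a t ht, Real.rpow_neg_one]; rfl
    constructor
    · by_contra! hc
      apply hx
      have h1 : Φ (dil8 n a 1 x) = 1 := hΦ1 _ (by rw [hd r hr0]; exact hc.le)
      have h2 : Φ x = 1 :=
        hΦ1 _ ((aq8_anti n a ha (r / 2) r (by linarith) (by linarith) x).trans hc.le)
      simp [Θ, h1, h2]
    · by_contra! hc
      apply hx
      have h1 : Φ (dil8 n a 1 x) = 0 := by
        by_contra h0
        have := hΦ0 _ h0
        rw [hd R hR0] at this
        have := aq8_anti n a ha (R / 2) R (by linarith) (by linarith) x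
        linarith
      have h2 : Φ x = 0 := by
        by_contra h0
        have := hΦ0 _ h0
        linarith
      simp [Θ, h1, h2]
  have hRc := aq8_compact n a R hR0
  have hΦs' : tsupport Φ ⊆ {ξ : RV n | anorm ξ < 2 * ε} := fun x hx => by
    have := anorm8_le n a ha anorm h R hR0 x (hΦs hx)
    change anorm x < 2 * ε
    linarith
  have hΘs' : tsupport Θ ⊆ {ξ : RV n | ε / 2 < anorm ξ ∧ anorm ξ < 2 * ε} := fun x hx => by
    have h1 := anorm8_le n a ha anorm h R hR0 x (hΘs hx).2
    have h2 := anorm8_ge n a ha anorm h (r / 2) x (hΘs hx).1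
    constructor <;> linarith
  obtain ⟨lam0, hl0, hm0⟩ := FT8_div n ψ0 Φ hΦ
    (hRc.of_isClosed_subset (isClosed_tsupport _) hΦs)
    (fun x hx => norm_pos_iff.1 (hT.1 x (hΦs' hx)))
  obtain ⟨lam, hl, hm⟩ := FT8_div n ψ Θ hΘ
    (hRc.of_isClosed_subset (isClosed_tsupport _) (fun x hx => (hΘs hx).2))
    (fun x hx => norm_pos_iff.1 (hT.2 x (hΘs' hx).1 (hΘs' hx).2))
  refine ⟨lam0, lam, hl0.trans hΦs', hl.trans hΘs', fun ξ => ?_⟩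
  simp only [hm, hm0]
  let u : ℕ → ℂ := fun j => Φ (dil8 n a (-(j:ℝ)) ξ)
  have hu : ∀ j : ℕ, Θ (fun i => (2:ℝ) ^ (-((j:ℝ) + 1) * a i) * ξ i) = u (j + 1) - u j := by
    intro j
    have h1 : (fun i => (2:ℝ) ^ (-((j:ℝ) + 1) * a i) * ξ i) = dil8 n a (-((j + 1 : ℕ):ℝ)) ξ := by
      funext i; simp [dil8]
    have h2 : dil8 n a 1 (dil8 n a (-((j + 1 : ℕ):ℝ)) ξ) = dil8 n a (-(j:ℝ)) ξ := by
      funext i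
      simp only [dil8]
      rw [← mul_assoc, ← Real.rpow_add (by norm_num)]
      congr 2
      push_cast; ring
    rw [h1]
    simp only [Θ, u, h2]
  simp only [hu]
  have hlim : Tendsto (fun j : ℕ => aq8 n a r (dil8 n a (-(j:ℝ)) ξ)) atTop (𝓝 0) := by
    have := ((aq8_cont n a r).tendsto 0).comp (dil8_tendsto n a ha ξ)
    rwa [aq8_zero] at this
  obtain ⟨N, hN⟩ := eventually_atTop.1 (hlim.eventually (gt_mem_nhds (zero_lt_one)))
  have hu1 : ∀ j, N ≤ j → u j = 1 := fun j hj => hΦ1 _ (hN j hj).le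
  have hz : ∀ j, N ≤ j → u (j + 1) - u j = 0 := fun j hj => by
    rw [hu1 j hj, hu1 (j + 1) (by omega), sub_self]
  constructor
  · refine (Set.finite_lt_nat N).subset fun j hj => ?_
    by_contra hc
    exact hj (hz j (not_lt.1 hc))
  · rw [tsum_eq_sum (s := Finset.range N) (fun j hj => hz j (by simpa using hj)),
      Finset.sum_range_sub, hu1 N le_rfl]
    have : u 0 = Φ ξ := by
      have h0 : dil8 n a 0 ξ = ξ := by funext i; simp [dil8]
      simp [u, h0]
    rw [this]; ring
end
end

section
/- Let M ≥ −1 be an integer and let α, β ∈ ℕ₀ⁿ be multi-indices. Then there is a constant C (depending only on α, β, M, a and n) such that for all 0 < t ≤ 1, all ν ∈ 𝒮(ℝⁿ) and all μ ∈ 𝒮_M: p_{α,β}( t^{−|a|}·μ(t^{−a}·) * ν ) ≤ C · t^{(M+1)a_0} · max{ p_{0,ζ}(𝓕μ) : ζ with |ζ| ≤ M+1 or ζ ≤ α } · max{ q_{M+1,γ}(𝓕(D^β ν)) : γ ≤ α }. -/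
open MeasureTheory Complex
open scoped ENNReal NNReal BigOperators

noncomputable section

open SchwartzMap FourierTransform LineDeriv in
/-- Schwartz maps on the Euclidean space. -/
def hPull (n : ℕ) (f : SchwartzMap (RV n) ℂ) : SchwartzMap (EuclideanSpace ℝ (Fin n)) ℂ :=
  SchwartzMap.compCLMOfContinuousLinearEquiv ℂ (EuclideanSpace.equiv (Fin n) ℝ) f

def hSc (n : ℕ) : RV n ≃L[ℝ] EuclideanSpace ℝ (Fin n) :=
  (ContinuousLinearEquiv.smulLeft (Units.mk0 ((2 * Real.pi)⁻¹ : ℝ)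
    (inv_ne_zero (by positivity)))).trans
    (EuclideanSpace.equiv (Fin n) ℝ).symm

lemma hSc_apply (n : ℕ) (ξ : RV n) (i : Fin n) : hSc n ξ i = (2 * Real.pi)⁻¹ * ξ i := by
  rfl

open FourierTransform in
def hFTS (n : ℕ) (f : SchwartzMap (RV n) ℂ) : SchwartzMap (RV n) ℂ :=
  SchwartzMap.compCLMOfContinuousLinearEquiv ℂ (hSc n) (𝓕 (hPull n f))

open FourierTransform in
lemma hFTS_apply (n : ℕ) (f : SchwartzMap (RV n) ℂ) (ξ : RV n) :
    hFTS n f ξ = 𝓕 (hPull n f) (hSc n ξ) := rfl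

lemma hPull_apply (n : ℕ) (f : SchwartzMap (RV n) ℂ) (v) :
    hPull n f v = f v.ofLp := rfl

open FourierTransform in
lemma hFTS_eq (n : ℕ) (f : SchwartzMap (RV n) ℂ) : ⇑(hFTS n f) = FT n f := by
  ext ξ
  rw [hFTS_apply, SchwartzMap.fourier_coe, Real.fourier_eq', FT]
  rw [← (PiLp.volume_preserving_ofLp (Fin n)).integral_comp
    (MeasurableEquiv.toLp 2 (Fin n → ℝ)).symm.measurableEmbedding]
  congr 1
  ext v
  rw [smul_eq_mul, hPull_apply]
  congr 2
  rw [PiLp.inner_apply]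
  have : (2 * Real.pi) ≠ 0 := by positivity
  have h2 : -2 * Real.pi * ∑ i, inner ℝ (v.ofLp i) ((hSc n ξ) i) = - ∑ i, v.ofLp i * ξ i := by
    rw [Finset.mul_sum, ← Finset.sum_neg_distrib]
    apply Finset.sum_congr rfl
    intro i _
    rw [hSc_apply]
    simp
    field_simp
  rw [h2]
  push_cast
  ring

open FourierTransform Convolution in
lemma h_conv (n : ℕ) (f g : SchwartzMap (RV n) ℂ) :
    ∃ S : SchwartzMap (RV n) ℂ, ⇑S = conv2 n f g ∧ ∀ ξ, hFTS n S ξ = hFTS n f ξ * hFTS n g ξ := by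
  refine ⟨SchwartzMap.compCLMOfContinuousLinearEquiv ℂ (EuclideanSpace.equiv (Fin n) ℝ).symm
    (SchwartzMap.convolution (ContinuousLinearMap.mul ℂ ℂ) (hPull n f) (hPull n g)), ?_, ?_⟩
  · ext x
    have := SchwartzMap.convolution_apply (ContinuousLinearMap.mul ℂ ℂ) (hPull n f) (hPull n g)
      ((EuclideanSpace.equiv (Fin n) ℝ).symm x)
    rw [SchwartzMap.compCLMOfContinuousLinearEquiv_apply]
    refine this.trans ?_
    rw [convolution_def, conv2, ← (PiLp.volume_preserving_ofLp (Fin n)).integral_comp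
      (MeasurableEquiv.toLp 2 (Fin n → ℝ)).symm.measurableEmbedding]
    rfl
  · intro ξ
    rw [hFTS_apply]
    have : hPull n (SchwartzMap.compCLMOfContinuousLinearEquiv ℂ
      (EuclideanSpace.equiv (Fin n) ℝ).symm
      (SchwartzMap.convolution (ContinuousLinearMap.mul ℂ ℂ) (hPull n f) (hPull n g))) =
      (SchwartzMap.convolution (ContinuousLinearMap.mul ℂ ℂ) (hPull n f) (hPull n g)) := by
      ext v
      rfl
    rw [this, SchwartzMap.fourier_convolution]
    rfl

/-- partial derivative on the Schwartz space -/
def hP (n : ℕ) (i : Fin n) (f : SchwartzMap (RV n) ℂ) : SchwartzMap (RV n) ℂ :=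
  LineDeriv.lineDerivOp (Pi.single i (1:ℝ) : RV n) f

lemma hP_coe (n : ℕ) (i : Fin n) (f : SchwartzMap (RV n) ℂ) : ⇑(hP n i f) = pderiv1 n i f := by
  ext x
  exact SchwartzMap.lineDerivOp_apply_eq_fderiv _ _ _

lemma hP_smul (n : ℕ) (i : Fin n) (c : ℂ) (f : SchwartzMap (RV n) ℂ) :
    hP n i (c • f) = c • hP n i f := LineDeriv.lineDerivOp_smul _ _ _

lemma hP_add (n : ℕ) (i : Fin n) (f g : SchwartzMap (RV n) ℂ) :
    hP n i (f + g) = hP n i f + hP n i g := LineDeriv.lineDerivOp_add _ _ _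

/-- multiplication by coordinate -/
def hX (n : ℕ) (i : Fin n) (f : SchwartzMap (RV n) ℂ) : SchwartzMap (RV n) ℂ :=
  SchwartzMap.smulLeftCLM ℂ (fun x : RV n => x i) f

lemma hX_apply (n : ℕ) (i : Fin n) (f : SchwartzMap (RV n) ℂ) (x) :
    hX n i f x = (x i : ℂ) * f x := by
  rw [hX, SchwartzMap.smulLeftCLM_apply_apply]
  · simp
  · exact (ContinuousLinearMap.proj (R := ℝ) (φ := fun _ : Fin n => ℝ) i).hasTemperateGrowth

lemma hPull_P (n : ℕ) (i : Fin n) (f : SchwartzMap (RV n) ℂ) :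
    hPull n (hP n i f) = LineDeriv.lineDerivOp (EuclideanSpace.single i (1:ℝ)) (hPull n f) := by
  rw [hPull, hPull, SchwartzMap.lineDerivOp_compCLMOfContinuousLinearEquiv]
  congr 1

open FourierTransform in
lemma hFTS_P (n : ℕ) (i : Fin n) (f : SchwartzMap (RV n) ℂ) (ξ : RV n) :
    hFTS n (hP n i f) ξ = I * ξ i * hFTS n f ξ := by
  rw [hFTS_apply, hPull_P, SchwartzMap.fourier_lineDerivOp_eq, hFTS_apply]
  have : (fun x : EuclideanSpace ℝ (Fin n) =>
    inner ℝ x (EuclideanSpace.single i (1:ℝ))).HasTemperateGrowth := by fun_prop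
  rw [_root_.smul_apply, SchwartzMap.smulLeftCLM_apply_apply this]
  simp only [EuclideanSpace.inner_single_right, hSc_apply]
  simp
  field_simp

open FourierTransform in
lemma hP_FTS (n : ℕ) (i : Fin n) (f : SchwartzMap (RV n) ℂ) :
    hP n i (hFTS n f) = hFTS n ((-I) • hX n i f) := by
  rw [hFTS, hP, SchwartzMap.lineDerivOp_compCLMOfContinuousLinearEquiv]
  have h : hSc n (Pi.single i 1) = (2 * Real.pi)⁻¹ • EuclideanSpace.single i (1:ℝ) := by
    ext j
    rw [hSc_apply]
    simp [Pi.single_apply]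
  rw [h, LineDeriv.lineDerivOp_left_smul, SchwartzMap.lineDerivOp_fourier_eq, hFTS]
  congr 1
  have : (fun x : EuclideanSpace ℝ (Fin n) =>
    inner ℝ x (EuclideanSpace.single i (1:ℝ))).HasTemperateGrowth := by fun_prop
  have h3 : ∀ u : SchwartzMap (EuclideanSpace ℝ (Fin n)) ℂ,
    (2 * Real.pi)⁻¹ • (𝓕 u) = 𝓕 ((2 * Real.pi)⁻¹ • u) := fun u =>
      (FourierTransform.fourier_smul _ _).symm
  rw [h3]
  congr 1
  ext v
  rw [hPull_apply]
  rw [_root_.smul_apply, _root_.smul_apply, SchwartzMap.smulLeftCLM_apply_apply this,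
   _root_.smul_apply, hX_apply, hPull_apply]
  simp only [EuclideanSpace.inner_single_right]
  simp
  field_simp

open FourierTransform in
lemma h_inv_bound (n : ℕ) : ∃ c : ℝ≥0, ∀ (g : SchwartzMap (RV n) ℂ) (x : RV n),
    ‖g x‖ₑ ≤ c * ∫⁻ ξ, ‖hFTS n g ξ‖ₑ := by
  have : (Measure.map (hSc n) volume).IsAddHaarMeasure := (hSc n).isAddHaarMeasure_map _
  let c := Measure.addHaarScalarFactor (volume : Measure (EuclideanSpace ℝ (Fin n)))
    (Measure.map (hSc n) volume)
  refine ⟨c, fun g x => ?_⟩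
  have hv : (volume : Measure (EuclideanSpace ℝ (Fin n))) = c • Measure.map (hSc n) volume :=
    Measure.isAddLeftInvariant_eq_smul _ _
  have h1 : g x = 𝓕⁻ (𝓕 (hPull n g)) (WithLp.toLp 2 x) := by
    simp [hPull_apply]
  rw [h1, SchwartzMap.fourierInv_coe, Real.fourierInv_eq]
  refine (enorm_integral_le_lintegral_enorm _).trans ?_
  have h2 : ∀ v : EuclideanSpace ℝ (Fin n),
    ‖Real.fourierChar (inner ℝ v (WithLp.toLp 2 x)) • (𝓕 (hPull n g)) v‖ₑ
      = ‖(𝓕 (hPull n g)) v‖ₑ := by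
    intro v
    simp only [enorm, nnnorm]
    simp
  simp_rw [h2]
  conv_lhs => rw [hv]
  rw [lintegral_smul_measure, lintegral_map]
  · rfl
  · exact (𝓕 (hPull n g)).continuous.measurable.enorm
  · exact (hSc n).continuous.measurable

lemma hP_comm (n : ℕ) (i j : Fin n) (f : SchwartzMap (RV n) ℂ) :
    hP n i (hP n j f) = hP n j (hP n i f) := by
  have h : hFTS n (hP n i (hP n j f)) = hFTS n (hP n j (hP n i f)) := by
    ext ξ
    simp only [hFTS_P]
    ring
  have h2 : FourierTransform.fourier (hPull n (hP n i (hP n j f))) =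
      FourierTransform.fourier (hPull n (hP n j (hP n i f))) := by
    ext v
    have := DFunLike.congr_fun h ((hSc n).symm v)
    simpa [hFTS_apply] using this
  have h3 := congrArg FourierTransformInv.fourierInv h2
  rw [FourierTransform.fourierInv_fourier_eq, FourierTransform.fourierInv_fourier_eq] at h3
  ext x
  exact DFunLike.congr_fun h3 (WithLp.toLp 2 x)

/-- fold of the derivatives -/
def hEl (n : ℕ) (l : List (Fin n)) (α : Fin n → ℕ) (f : SchwartzMap (RV n) ℂ) :
    SchwartzMap (RV n) ℂ := l.foldr (fun i h => (hP n i)^[α i] h) f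

def hE (n : ℕ) (α : Fin n → ℕ) (f : SchwartzMap (RV n) ℂ) : SchwartzMap (RV n) ℂ :=
  hEl n (List.finRange n) α f

lemma hEl_cons (n : ℕ) (i : Fin n) (l : List (Fin n)) (α : Fin n → ℕ)
    (f : SchwartzMap (RV n) ℂ) : hEl n (i :: l) α f = (hP n i)^[α i] (hEl n l α f) := rfl

lemma hPiter_coe (n : ℕ) (i : Fin n) (k : ℕ) (f : SchwartzMap (RV n) ℂ) :
    ⇑((hP n i)^[k] f) = pderivIter n i k f := by
  induction k with
  | zero => rfl
  | succ k ih => rw [Function.iterate_succ_apply', hP_coe, ih]; rfl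

lemma hEl_coe (n : ℕ) (l : List (Fin n)) (α : Fin n → ℕ) (f : SchwartzMap (RV n) ℂ) :
    ⇑(hEl n l α f) = l.foldr (fun i h => pderivIter n i (α i) h) f := by
  induction l with
  | nil => rfl
  | cons i l ih => rw [hEl_cons, hPiter_coe, ih]; rfl

lemma hDop (n : ℕ) (α : Fin n → ℕ) (f : SchwartzMap (RV n) ℂ) :
    Dop n α f = ⇑((-I) ^ (∑ i, α i) • hE n α f) := by
  ext x
  rw [Dop, ← hEl_coe]
  rfl

lemma hEl_P (n : ℕ) (l : List (Fin n)) (α : Fin n → ℕ) (i : Fin n) (f : SchwartzMap (RV n) ℂ) :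
    hEl n l α (hP n i f) = hP n i (hEl n l α f) := by
  induction l with
  | nil => rfl
  | cons j l ih =>
    rw [hEl_cons, hEl_cons, ih]
    have : Function.Commute (hP n i) (hP n j) := fun g => hP_comm n i j g
    exact ((this.iterate_right (α j)) _).symm

lemma hEl_notin (n : ℕ) (l : List (Fin n)) (α : Fin n → ℕ) (i : Fin n) (hi : i ∉ l)
    (f : SchwartzMap (RV n) ℂ) : hEl n l (α + Pi.single i 1) f = hEl n l α f := by
  induction l with
  | nil => rfl
  | cons j l ih =>
    rw [List.mem_cons, not_or] at hi
    rw [hEl_cons, hEl_cons, ih hi.2]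
    simp [Pi.single_apply, Ne.symm hi.1]

lemma hEl_succ (n : ℕ) (l : List (Fin n)) (hl : l.Nodup) (α : Fin n → ℕ) (i : Fin n) (hi : i ∈ l)
    (f : SchwartzMap (RV n) ℂ) : hEl n l (α + Pi.single i 1) f = hEl n l α (hP n i f) := by
  induction l with
  | nil => simp at hi
  | cons j l ih =>
    rw [List.nodup_cons] at hl
    rw [hEl_cons, hEl_cons]
    by_cases hij : i = j
    · subst hij
      rw [hEl_notin n l α i hl.1, hEl_P]
      simp
    · rw [ih hl.2 (by simpa [hij] using hi)]
      simp [Pi.single_apply, Ne.symm hij]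

lemma hE_succ (n : ℕ) (α : Fin n → ℕ) (i : Fin n) (f : SchwartzMap (RV n) ℂ) :
    hE n (α + Pi.single i 1) f = hE n α (hP n i f) :=
  hEl_succ n _ (List.nodup_finRange n) α i (List.mem_finRange i) f

lemma hE_zero (n : ℕ) (f : SchwartzMap (RV n) ℂ) : hE n 0 f = f := by
  unfold hE
  induction List.finRange n with
  | nil => rfl
  | cons j l ih => rw [hEl_cons, ih]; rfl

lemma hE_P (n : ℕ) (α : Fin n → ℕ) (i : Fin n) (f : SchwartzMap (RV n) ℂ) :
    hE n α (hP n i f) = hP n i (hE n α f) := hEl_P n _ α i f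

lemma hMI {n : ℕ} {p : (Fin n → ℕ) → Prop} (h0 : p 0)
    (hs : ∀ α i, p α → p (α + Pi.single i 1)) : ∀ α, p α := by
  have : ∀ k, ∀ α : Fin n → ℕ, ∑ i, α i = k → p α := by
    intro k
    induction k with
    | zero =>
      intro α h
      have : α = 0 := by
        ext i
        simpa using (Finset.sum_eq_zero_iff.1 h) i (Finset.mem_univ i)
      rwa [this]
    | succ k ih =>
      intro α h
      obtain ⟨i, -, hi⟩ : ∃ i ∈ Finset.univ, α i ≠ 0 := by
        apply Finset.exists_ne_zero_of_sum_ne_zero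
        omega
      have hle : Pi.single i 1 ≤ α := by
        intro j
        by_cases hj : j = i
        · subst hj; simp; omega
        · simp [Pi.single_apply, hj]
      have e : α = (α - Pi.single i 1) + Pi.single i 1 := (tsub_add_cancel_of_le hle).symm
      rw [e]
      apply hs
      apply ih
      have h2 : ∑ j, α j = ∑ j, ((α - Pi.single i 1 : Fin n → ℕ) j + (Pi.single i 1 : Fin n → ℕ) j) := by
        conv_lhs => rw [e]
        rfl
      rw [Finset.sum_add_distrib] at h2
      simp at h2 ⊢
      omega
  exact fun α => this _ α rfl

lemma hE_add (n : ℕ) (α : Fin n → ℕ) : ∀ (f g : SchwartzMap (RV n) ℂ),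
    hE n α (f + g) = hE n α f + hE n α g := by
  revert α; refine hMI ?_ ?_
  · intro f g; simp only [hE_zero]
  · intro α i ih f g
    simp only [hE_succ, hP_add, ih]

lemma hE_smul (n : ℕ) (α : Fin n → ℕ) (c : ℂ) : ∀ (f : SchwartzMap (RV n) ℂ),
    hE n α (c • f) = c • hE n α f := by
  revert α; refine hMI ?_ ?_
  · intro f; simp only [hE_zero]
  · intro α i ih f
    simp only [hE_succ, hP_smul, ih]

lemma hE_hE (n : ℕ) (α δ : Fin n → ℕ) (f : SchwartzMap (RV n) ℂ) :
    hE n α (hE n δ f) = hE n (δ + α) f := by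
  refine hMI (p := fun α => ∀ f, hE n α (hE n δ f) = hE n (δ + α) f) ?_ ?_ α f
  · intro f; simp only [hE_zero, add_zero]
  · intro α i ih f
    rw [hE_succ, ← hE_P, ih, ← hE_succ, add_assoc]

def hMulS (n : ℕ) (f g : SchwartzMap (RV n) ℂ) : SchwartzMap (RV n) ℂ :=
  SchwartzMap.pairing (ContinuousLinearMap.mul ℂ ℂ) f g

lemma hMulS_apply (n : ℕ) (f g : SchwartzMap (RV n) ℂ) (x) : hMulS n f g x = f x * g x := rfl

lemma hP_M (n : ℕ) (i : Fin n) (f g : SchwartzMap (RV n) ℂ) :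
    hP n i (hMulS n f g) = hMulS n (hP n i f) g + hMulS n f (hP n i g) := by
  ext x
  rw [_root_.add_apply, hMulS_apply, hMulS_apply, hP_coe, hP_coe, hP_coe, pderiv1, pderiv1, pderiv1]
  have : ⇑(hMulS n f g) = fun x => f x * g x := rfl
  rw [this, fderiv_fun_mul (f.differentiableAt) (g.differentiableAt)]
  simp
  ring

lemma hLeib (n : ℕ) (α : Fin n → ℕ) : ∃ L : List ((Fin n → ℕ) × (Fin n → ℕ)),
    (∀ p ∈ L, p.1 + p.2 = α) ∧ ∀ f g, hE n α (hMulS n f g) =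
      (L.map (fun p => hMulS n (hE n p.1 f) (hE n p.2 g))).sum := by
  revert α; refine hMI ?_ ?_
  · refine ⟨[(0, 0)], by simp, fun f g => ?_⟩
    simp [hE_zero]
  · rintro α i ⟨L, h1, h2⟩
    refine ⟨L.map (fun p => (p.1 + Pi.single i 1, p.2)) ++
      L.map (fun p => (p.1, p.2 + Pi.single i 1)), ?_, ?_⟩
    · intro p hp
      rw [List.mem_append, List.mem_map, List.mem_map] at hp
      rcases hp with ⟨q, hq, rfl⟩ | ⟨q, hq, rfl⟩
      · simp only [← h1 q hq]; abel
      · simp only [← h1 q hq]; abel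
    · intro f g
      rw [hE_succ, hP_M, hE_add, h2, h2, List.map_append, List.sum_append, List.map_map,
        List.map_map]
      simp only [Function.comp_def, hE_succ]

def hT (n : ℕ) (a : Fin n → ℝ) (t : ℝ) (ht : 0 < t) : RV n ≃L[ℝ] RV n :=
  ContinuousLinearEquiv.piCongrRight (fun i => ContinuousLinearEquiv.smulLeft
    (Units.mk0 (t ^ (a i)) (Real.rpow_pos_of_pos ht _).ne'))

lemma hT_apply (n : ℕ) (a : Fin n → ℝ) (t : ℝ) (ht : 0 < t) (x : RV n) (i : Fin n) :
    hT n a t ht x i = t ^ (a i) * x i := rfl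

def hC (n : ℕ) (a : Fin n → ℝ) (t : ℝ) (ht : 0 < t) (f : SchwartzMap (RV n) ℂ) :
    SchwartzMap (RV n) ℂ := SchwartzMap.compCLMOfContinuousLinearEquiv ℂ (hT n a t ht) f

lemma hC_apply (n : ℕ) (a : Fin n → ℝ) (t : ℝ) (ht : 0 < t) (f : SchwartzMap (RV n) ℂ) (x) :
    hC n a t ht f x = f (hT n a t ht x) := rfl

lemma hP_C (n : ℕ) (a : Fin n → ℝ) (t : ℝ) (ht : 0 < t) (i : Fin n) (f : SchwartzMap (RV n) ℂ) :
    hP n i (hC n a t ht f) = ((t ^ (a i) : ℝ) : ℂ) • hC n a t ht (hP n i f) := by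
  rw [hP, hC, SchwartzMap.lineDerivOp_compCLMOfContinuousLinearEquiv]
  have : hT n a t ht (Pi.single i 1) = t ^ (a i) • Pi.single i (1:ℝ) := by
    ext j
    rw [hT_apply]
    by_cases h : j = i
    · subst h; simp
    · simp [h]
  rw [this, LineDeriv.lineDerivOp_left_smul]
  ext x
  rw [hC, _root_.smul_apply]
  simp [hP]

lemma hE_C (n : ℕ) (a : Fin n → ℝ) (t : ℝ) (ht : 0 < t) (α : Fin n → ℕ) :
    ∀ f : SchwartzMap (RV n) ℂ, hE n α (hC n a t ht f) =
      ((t ^ (∑ i, a i * α i) : ℝ) : ℂ) • hC n a t ht (hE n α f) := by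
  revert α; refine hMI ?_ ?_
  · intro f; simp [hE_zero]
  · intro α i ih f
    rw [hE_succ, hP_C, hE_smul, ih, hE_succ, smul_smul]
    congr 1
    rw [← Complex.ofReal_mul, ← Real.rpow_add ht]
    congr 2
    simp only [Pi.add_apply, Nat.cast_add, mul_add, Finset.sum_add_distrib]
    rw [add_comm]
    congr 1
    rw [Finset.sum_eq_single i]
    · simp
    · intro j _ h; simp [h]
    · simp

lemma hTaylor (n : ℕ) (P : ℝ) (m : ℕ) : ∀ f : SchwartzMap (RV n) ℂ,
    (∀ ζ : Fin n → ℕ, ∑ i, ζ i < m → hE n ζ f 0 = 0) →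
    (∀ ζ : Fin n → ℕ, ∑ i, ζ i = m → ∀ x, ‖hE n ζ f x‖ ≤ P) →
    ∀ x, ‖f x‖ ≤ P * (∑ i, |x i|) ^ m := by
  induction m with
  | zero =>
    intro f _ h x
    simpa [hE_zero] using h 0 (by simp) x
  | succ m ih =>
    intro f h0 h1 x
    have hP0 : 0 ≤ P ∨ n = 0 := by
      rcases Nat.eq_zero_or_pos n with h | h
      · exact Or.inr h
      · exact Or.inl ((norm_nonneg _).trans (h1 (Pi.single ⟨0, h⟩ (m+1)) (by simp) 0))
    have hsum : ∀ (ζ : Fin n → ℕ) i, ∑ j, (ζ + Pi.single i 1 : Fin n → ℕ) j = ∑ j, ζ j + 1 := by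
      intro ζ i
      simp [Finset.sum_add_distrib]
    have hd : ∀ i y, ‖hP n i f y‖ ≤ P * (∑ i, |y i|) ^ m := by
      intro i
      apply ih
      · intro ζ hζ
        rw [← hE_succ]
        exact h0 _ (by rw [hsum]; omega)
      · intro ζ hζ
        rw [← hE_succ]
        exact h1 _ (by rw [hsum]; omega)
    have hf0 : f 0 = 0 := by simpa [hE_zero] using h0 0 (by simp)
    rcases hP0 with hP0 | hn
    swap
    · subst hn
      have : x = 0 := Subsingleton.elim _ _
      rw [this, hf0]; simp
    have hder : ∀ s : ℝ, HasDerivAt (fun s : ℝ => f (s • x)) (fderiv ℝ f (s • x) x) s := by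
      intro s
      have h1 : HasDerivAt (fun s : ℝ => s • x) x s := by
        simpa using (hasDerivAt_id s).smul_const x
      exact (f.differentiableAt.hasFDerivAt).comp_hasDerivAt s h1
    have hb : ∀ s ∈ Set.Ico (0:ℝ) 1, ‖fderiv ℝ f (s • x) x‖ ≤ P * (∑ i, |x i|) ^ (m+1) := by
      intro s hs
      have hx : x = ∑ i, x i • (Pi.single i (1:ℝ) : RV n) := by
        ext j
        simp [Finset.sum_apply, Pi.single_apply]
      have e : fderiv ℝ f (s • x) x = ∑ i, x i • hP n i f (s • x) := by
        conv_lhs => arg 2; rw [hx]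
        rw [map_sum]
        apply Finset.sum_congr rfl
        intro i _
        rw [map_smul, hP_coe, pderiv1]
      rw [e]
      have hs' : ∑ i, |(s • x) i| ≤ ∑ i, |x i| := by
        apply Finset.sum_le_sum
        intro i _
        rw [Pi.smul_apply, smul_eq_mul, abs_mul, abs_of_nonneg hs.1]
        exact mul_le_of_le_one_left (abs_nonneg _) hs.2.le
      calc ‖∑ i, x i • hP n i f (s • x)‖ ≤ ∑ i, ‖x i • hP n i f (s • x)‖ := norm_sum_le _ _
        _ ≤ ∑ i, |x i| * (P * (∑ i, |x i|) ^ m) := by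
          apply Finset.sum_le_sum
          intro i _
          rw [norm_smul, Real.norm_eq_abs]
          gcongr
          refine (hd i _).trans ?_
          gcongr
        _ = _ := by rw [← Finset.sum_mul]; ring
    have := norm_image_sub_le_of_norm_deriv_le_segment_01' (f := fun s : ℝ => f (s • x))
      (fun s _ => (hder s).hasDerivWithinAt) hb
    simpa [hf0] using this

lemma hFTS_scale (n : ℕ) (a : Fin n → ℝ) (t : ℝ) (ht : 0 < t) (μ : SchwartzMap (RV n) ℂ) :
    ∃ μt : SchwartzMap (RV n) ℂ,
      ⇑μt = (fun x => ((t ^ (-(∑ i, a i)) : ℝ) : ℂ) * μ (fun i => t ^ (-(a i)) * x i)) ∧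
      hFTS n μt = hC n a t ht (hFTS n μ) := by
  refine ⟨((t ^ (-(∑ i, a i)) : ℝ) : ℂ) • hC n (fun i => - a i) t ht μ, rfl, ?_⟩
  ext ξ
  rw [hC_apply, hFTS_eq, hFTS_eq, FT, FT]
  have hdet : (Matrix.diagonal (fun i => t ^ a i)).det = t ^ (∑ i, a i) := by
    rw [Matrix.det_diagonal, Real.rpow_sum_of_pos ht]
  have hpos : 0 < t ^ (∑ i, a i) := Real.rpow_pos_of_pos ht _
  have hmap := Real.smul_map_diagonal_volume_pi (D := fun i => t ^ a i)
    (by rw [hdet]; exact hpos.ne')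
  rw [hdet] at hmap
  conv_lhs => rw [← hmap]
  have hcont : Continuous (Matrix.toLin' (Matrix.diagonal (fun i => t ^ a i))) :=
    LinearMap.continuous_of_finiteDimensional _
  rw [integral_smul_measure, integral_map hcont.measurable.aemeasurable]
  · rw [ENNReal.toReal_ofReal (abs_nonneg _), abs_of_pos hpos, ← integral_smul]
    congr 1
    ext y
    have hy : Matrix.toLin' (Matrix.diagonal (fun i => t ^ a i)) y = fun i => t ^ a i * y i := by
      ext i
      simp [Matrix.mulVec_diagonal]
    rw [hy, _root_.smul_apply, hC_apply]
    have h1 : hT n (fun i => - a i) t ht (fun i => t ^ a i * y i) = y := by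
      ext i
      rw [hT_apply, ← mul_assoc, ← Real.rpow_add ht]
      simp
    rw [h1]
    have h2 : ((t ^ (∑ i, a i) : ℝ) : ℂ) * ((t ^ (-∑ i, a i) : ℝ) : ℂ) = 1 := by
      rw [← Complex.ofReal_mul, ← Real.rpow_add ht]; simp
    have h3 : ∑ i, t ^ a i * y i * ξ i = ∑ i, y i * hT n a t ht ξ i := by
      apply Finset.sum_congr rfl
      intro i _
      rw [hT_apply]; ring
    rw [h3, smul_eq_mul, Complex.real_smul]
    linear_combination (Complex.exp (-I * ↑(∑ i, y i * (hT n a t ht) ξ i)) * μ y) * h2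
  · apply Continuous.aestronglyMeasurable
    have := (((t ^ (-(∑ i, a i)) : ℝ) : ℂ) • hC n (fun i => - a i) t ht μ).continuous
    fun_prop

lemma hXpow (n : ℕ) (α : Fin n → ℕ) : ∀ h : SchwartzMap (RV n) ℂ,
    ∃ g : SchwartzMap (RV n) ℂ, hFTS n g = hE n α (hFTS n h) ∧
      ∀ x, ‖g x‖ = ‖((∏ i, x i ^ α i : ℝ) : ℂ) * h x‖ := by
  revert α; refine hMI ?_ ?_
  · intro h
    exact ⟨h, by rw [hE_zero], fun x => by simp⟩
  · intro α i ih h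
    obtain ⟨g, hg, hx⟩ := ih ((-I) • hX n i h)
    refine ⟨g, ?_, ?_⟩
    · rw [hg, hE_succ, hP_FTS]
    · intro x
      rw [hx, _root_.smul_apply, hX_apply]
      have : ∏ j, x j ^ (α + Pi.single i 1 : Fin n → ℕ) j = (∏ j, x j ^ α j) * x i := by
        simp only [Pi.add_apply, pow_add, Finset.prod_mul_distrib]
        congr 1
        rw [Finset.prod_eq_single i]
        · simp
        · intro j _ hj; simp [hj]
        · simp
      rw [this]
      simp
      ring

lemma hFTS_Emul (n : ℕ) (β : Fin n → ℕ) (h : RV n → ℂ) : ∀ f g : SchwartzMap (RV n) ℂ,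
    (∀ ξ, hFTS n f ξ = h ξ * hFTS n g ξ) →
    ∀ ξ, hFTS n (hE n β f) ξ = h ξ * hFTS n (hE n β g) ξ := by
  revert β; refine hMI ?_ ?_
  · intro f g hh; simpa [hE_zero] using hh
  · intro α i ih f g hh
    rw [hE_succ, hE_succ]
    apply ih
    intro ξ
    rw [hFTS_P, hFTS_P, hh]; ring

lemma hFTS_smul (n : ℕ) (c : ℂ) (f : SchwartzMap (RV n) ℂ) :
    hFTS n (c • f) = c • hFTS n f := by
  ext ξ
  rw [hFTS_eq, _root_.smul_apply, hFTS_eq, FT, FT, smul_eq_mul, ← integral_const_mul]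
  congr 1
  ext x
  rw [_root_.smul_apply, smul_eq_mul]
  ring

lemma hListInt (n : ℕ) {ι : Type} (L : List ι) (u : ι → SchwartzMap (RV n) ℂ) (B : ℝ≥0∞)
    (h : ∀ p ∈ L, ∫⁻ ξ, ‖u p ξ‖ₑ ≤ B) :
    ∫⁻ ξ, ‖(L.map u).sum ξ‖ₑ ≤ L.length * B := by
  induction L with
  | nil => simp
  | cons p L ih =>
    rw [List.map_cons, List.sum_cons]
    calc ∫⁻ ξ, ‖(u p + (L.map u).sum) ξ‖ₑ
        ≤ ∫⁻ ξ, (‖u p ξ‖ₑ + ‖(L.map u).sum ξ‖ₑ) := by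
          apply lintegral_mono
          intro ξ
          exact enorm_add_le _ _
      _ = (∫⁻ ξ, ‖u p ξ‖ₑ) + ∫⁻ ξ, ‖(L.map u).sum ξ‖ₑ :=
          lintegral_add_left (u p).continuous.measurable.enorm _
      _ ≤ B + L.length * B := by
          gcongr
          · exact h p (by simp)
          · exact ih (fun q hq => h q (by simp [hq]))
      _ = _ := by push_cast [List.length_cons]; ring

lemma hPointwise (n : ℕ) (hn : 1 ≤ n) (a : Fin n → ℝ) (ha : ∀ i, 1 ≤ a i) (t : ℝ) (ht : 0 < t)
    (ht1 : t ≤ 1) (m : ℕ) (F : SchwartzMap (RV n) ℂ) (P : ℝ) (δ : Fin n → ℕ)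
    (h0 : ∀ ζ : Fin n → ℕ, ∑ i, ζ i < m → hE n ζ F 0 = 0)
    (h1 : ∀ ζ : Fin n → ℕ, ∑ i, ζ i ≤ m → ∀ x, ‖hE n ζ F x‖ ≤ P)
    (h2 : ∀ x, ‖hE n δ F x‖ ≤ P) (ξ : RV n) :
    ‖hE n δ (hC n a t ht F) ξ‖ ≤
      (n : ℝ) ^ m * t ^ ((m : ℝ) * ⨅ i, a i) * P * (1 + ∑ i, (ξ i) ^ 2) ^ ((m : ℝ) / 2) := by
  set a0 := ⨅ i, a i with ha0
  have hne : Nonempty (Fin n) := ⟨⟨0, hn⟩⟩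
  have ha0le : ∀ i, a0 ≤ a i := fun i => ciInf_le (Set.finite_range a).bddBelow i
  have ha0pos : 0 ≤ a0 := by
    have : (1:ℝ) ≤ a0 := le_ciInf ha
    linarith
  have hP0 : 0 ≤ P := (norm_nonneg _).trans (h2 0)
  have hn1 : (1:ℝ) ≤ n := by exact_mod_cast hn
  set w := Real.sqrt (1 + ∑ i, (ξ i) ^ 2) with hw
  have hsum0 : 0 ≤ ∑ i, (ξ i) ^ 2 := Finset.sum_nonneg (fun i _ => sq_nonneg _)
  have hw1 : 1 ≤ w := by
    rw [hw, Real.one_le_sqrt]; linarith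
  have hwm : (1 + ∑ i, (ξ i) ^ 2) ^ ((m : ℝ) / 2) = w ^ m := by
    rw [hw, Real.sqrt_eq_rpow, ← Real.rpow_natCast, ← Real.rpow_mul (by linarith)]
    congr 1; ring
  have hta : ∀ k : ℕ, t ^ ((k : ℝ) * a0) = (t ^ a0) ^ k := by
    intro k
    rw [← Real.rpow_natCast, ← Real.rpow_mul ht.le, mul_comm]
  have hτ0 : 0 < t ^ a0 := Real.rpow_pos_of_pos ht _
  have hτ1 : t ^ a0 ≤ 1 := Real.rpow_le_one ht.le ht1 ha0pos
  have hδ : t ^ (∑ i, a i * δ i) ≤ (t ^ a0) ^ (∑ i, δ i) := by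
    rw [← hta]
    apply Real.rpow_le_rpow_of_exponent_ge ht ht1
    rw [Nat.cast_sum, Finset.sum_mul]
    apply Finset.sum_le_sum
    intro i _
    rw [mul_comm]
    exact mul_le_mul_of_nonneg_right (ha0le i) (Nat.cast_nonneg _)
  rw [hwm, hta, hE_C, _root_.smul_apply, smul_eq_mul, norm_mul, Complex.norm_real,
    Real.norm_of_nonneg (Real.rpow_pos_of_pos ht _).le, hC_apply]
  by_cases hc : m ≤ ∑ i, δ i
  · calc t ^ (∑ i, a i * δ i) * ‖hE n δ F (hT n a t ht ξ)‖ ≤ (t ^ a0) ^ m * P := by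
          gcongr
          · exact hδ.trans (pow_le_pow_of_le_one hτ0.le hτ1 hc)
          · exact h2 _
      _ = 1 * (t ^ a0) ^ m * P * 1 := by ring
      _ ≤ (n : ℝ) ^ m * (t ^ a0) ^ m * P * w ^ m := by
          gcongr
          · exact one_le_pow₀ hn1
          · exact one_le_pow₀ hw1
  · push Not at hc
    obtain ⟨k, hk⟩ := Nat.exists_eq_add_of_lt hc
    have hsa : ∀ ζ : Fin n → ℕ, ∑ i, (δ + ζ) i = ∑ i, δ i + ∑ i, ζ i := fun ζ => by
      simp [Finset.sum_add_distrib]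
    have hTay := hTaylor n P (k + 1) (hE n δ F)
      (fun ζ hζ => by rw [hE_hE]; exact h0 _ (by rw [hsa]; omega))
      (fun ζ hζ => by rw [hE_hE]; exact h1 _ (by rw [hsa]; omega)) (hT n a t ht ξ)
    have hl : ∑ i, |hT n a t ht ξ i| ≤ n * (t ^ a0 * w) := by
      calc ∑ i, |hT n a t ht ξ i| ≤ ∑ i : Fin n, t ^ a0 * w := by
            apply Finset.sum_le_sum
            intro i _
            rw [hT_apply, abs_mul, abs_of_pos (Real.rpow_pos_of_pos ht _)]
            refine mul_le_mul ?_ ?_ (abs_nonneg _) hτ0.le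
            · exact Real.rpow_le_rpow_of_exponent_ge ht ht1 (ha0le i)
            · rw [hw]
              apply Real.abs_le_sqrt
              have := Finset.single_le_sum (f := fun i => (ξ i) ^ 2)
                (fun i _ => sq_nonneg _) (Finset.mem_univ i)
              linarith
        _ = _ := by simp
    have hl0 : 0 ≤ ∑ i, |hT n a t ht ξ i| := Finset.sum_nonneg (fun i _ => abs_nonneg _)
    calc t ^ (∑ i, a i * δ i) * ‖hE n δ F (hT n a t ht ξ)‖
        ≤ (t ^ a0) ^ (∑ i, δ i) * (P * (n * (t ^ a0 * w)) ^ (k + 1)) := by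
          gcongr
          exact hTay.trans (by gcongr)
      _ = (n : ℝ) ^ (k + 1) * ((t ^ a0) ^ (∑ i, δ i) * (t ^ a0) ^ (k + 1)) * P * w ^ (k + 1) := by
          rw [mul_pow, mul_pow]; ring
      _ = (n : ℝ) ^ (k + 1) * (t ^ a0) ^ m * P * w ^ (k + 1) := by
          rw [← pow_add, ← add_assoc, ← hk]
      _ ≤ (n : ℝ) ^ m * (t ^ a0) ^ m * P * w ^ m := by
          gcongr
          all_goals first | omega | exact hw1

lemma hnI (k : ℕ) : ‖(-I) ^ k‖ = 1 := by simp

lemma hSemi (n : ℕ) (ζ : Fin n → ℕ) (F : SchwartzMap (RV n) ℂ) :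
    pSemiE n 0 ζ F = ⨆ x, ‖hE n ζ F x‖ₑ := by
  unfold pSemiE
  congr 1
  ext x
  rw [hDop]
  change ‖(_ : ℂ)‖ₑ = _
  rw [_root_.smul_apply, smul_eq_mul, enorm_mul, enorm_mul]
  have : ‖(-I) ^ (∑ i, ζ i)‖ₑ = 1 := by simp [← ofReal_norm]
  rw [this]
  simp

lemma hSemi_lt (n : ℕ) (ζ : Fin n → ℕ) (F : SchwartzMap (RV n) ℂ) :
    pSemiE n 0 ζ F < ⊤ := by
  rw [hSemi]
  refine lt_of_le_of_lt (b := ENNReal.ofReal (SchwartzMap.seminorm ℝ 0 0 (hE n ζ F))) ?_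
    ENNReal.ofReal_lt_top
  apply iSup_le
  intro x
  rw [← ofReal_norm]
  exact ENNReal.ofReal_le_ofReal (SchwartzMap.norm_le_seminorm ℝ _ x)

lemma hQ (n : ℕ) (N : ℝ) (γ : Fin n → ℕ) (F : SchwartzMap (RV n) ℂ) :
    qSemiE n N γ F = ∫⁻ x : RV n, ENNReal.ofReal ((1 + ∑ i, (x i) ^ 2) ^ (N / 2)) *
      ‖hE n γ F x‖ₑ := by
  unfold qSemiE
  congr 1
  ext x
  rw [hDop]
  change _ * ‖(_ : ℂ)‖ₑ = _
  rw [_root_.smul_apply, smul_eq_mul, enorm_mul]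
  have : ‖(-I) ^ (∑ i, γ i)‖ₑ = 1 := by simp [← ofReal_norm]
  rw [this, one_mul]

/-- Lemma 3.5 (Bui-type estimate for convolutions with moment conditions). -/
theorem stmt9 (n : ℕ) (hn : 1 ≤ n) (a : Fin n → ℝ) (ha : ∀ i, 1 ≤ a i)
    (M : ℤ) (hM : -1 ≤ M) (α β : Fin n → ℕ) :
    ∃ C : ℝ, 0 < C ∧
      ∀ t : ℝ, 0 < t → t ≤ 1 →
      ∀ ν μ : SchwartzMap (RV n) ℂ, MomentCond n M (⇑μ) →
        pSemiE n α β
            (conv2 n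
              (fun x => ((t ^ (-(∑ i, a i)) : ℝ) : ℂ) * μ (fun i => t ^ (-(a i)) * x i))
              (⇑ν))
          ≤ ENNReal.ofReal C * ENNReal.ofReal (t ^ (((M:ℝ) + 1) * ⨅ i, a i)) *
            (⨆ ζ : {ζ : Fin n → ℕ // (∑ i, (ζ i : ℤ)) ≤ M + 1 ∨ ζ ≤ α},
              pSemiE n 0 ζ.1 (FT n (⇑μ))) *
            (⨆ γ : {γ : Fin n → ℕ // γ ≤ α},
              qSemiE n ((M:ℝ) + 1) γ.1 (FT n (Dop n β (⇑ν)))) := by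
  obtain ⟨c, hc⟩ := h_inv_bound n
  obtain ⟨L, hL1, hL2⟩ := hLeib n α
  refine ⟨(c * L.length * (n : ℝ) ^ (M + 1).toNat) + 1, by positivity, ?_⟩
  intro t ht ht1 ν μ hμ
  obtain ⟨m, hm⟩ : ∃ m : ℕ, M + 1 = m := ⟨(M + 1).toNat, by omega⟩
  have hmr : (M : ℝ) + 1 = m := by exact_mod_cast hm
  rw [hmr, hm, Int.toNat_natCast]
  obtain ⟨μt, hμt, hF⟩ := hFTS_scale n a t ht μ
  rw [← hμt]
  obtain ⟨S, hS, hSF⟩ := h_conv n μt ν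
  rw [← hS]
  set F := hFTS n μ with hFdef
  set V : SchwartzMap (RV n) ℂ := (-I) ^ (∑ i, β i) • hE n β ν with hV
  rw [hDop n β ν, ← hV, ← hFTS_eq, ← hFTS_eq, ← hFdef]
  set G := hFTS n V with hG
  set Ps := (⨆ ζ : {ζ : Fin n → ℕ // (∑ i, (ζ i : ℤ)) ≤ m ∨ ζ ≤ α}, pSemiE n 0 ζ.1 F) with hPs
  set Q := (⨆ γ : {γ : Fin n → ℕ // γ ≤ α}, qSemiE n m γ.1 G) with hQdef
  have hPtop : Ps ≠ ⊤ := by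
    have hfin : Finite {ζ : Fin n → ℕ // (∑ i, (ζ i : ℤ)) ≤ m ∨ ζ ≤ α} := by
      apply Set.Finite.subset (Set.finite_Icc (0 : Fin n → ℕ) (fun i => max m (α i)))
      intro ζ hζ
      refine ⟨fun i => Nat.zero_le _, fun i => ?_⟩
      rcases hζ with h | h
      · apply le_max_of_le_left
        have h' : ∑ i, ζ i ≤ m := by exact_mod_cast h
        exact (Finset.single_le_sum (f := ζ) (fun _ _ => Nat.zero_le _)
          (Finset.mem_univ i)).trans h'
      · exact le_max_of_le_right (h i)
    have : Nonempty {ζ : Fin n → ℕ // (∑ i, (ζ i : ℤ)) ≤ m ∨ ζ ≤ α} :=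
      ⟨⟨0, Or.inr (fun i => Nat.zero_le _)⟩⟩
    obtain ⟨ζ0, h0⟩ := Finite.exists_max
      (fun ζ : {ζ : Fin n → ℕ // (∑ i, (ζ i : ℤ)) ≤ m ∨ ζ ≤ α} => pSemiE n 0 ζ.1 F)
    exact ((iSup_le h0).trans_lt (hSemi_lt n ζ0.1 F)).ne
  have hPle : ∀ ζ : Fin n → ℕ, ((∑ i, (ζ i : ℤ)) ≤ m ∨ ζ ≤ α) → ∀ x, ‖hE n ζ F x‖ ≤ Ps.toReal := by
    intro ζ hζ x
    have h1 : ‖hE n ζ F x‖ₑ ≤ Ps := by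
      refine le_trans ?_ (le_iSup (fun ζ : {ζ : Fin n → ℕ // (∑ i, (ζ i : ℤ)) ≤ m ∨ ζ ≤ α} =>
        pSemiE n 0 ζ.1 F) ⟨ζ, hζ⟩)
      simp only [hSemi]
      exact le_iSup (fun x => ‖hE n ζ F x‖ₑ) x
    rw [← toReal_enorm]
    exact ENNReal.toReal_mono hPtop h1
  have hmom : ∀ ζ : Fin n → ℕ, ∑ i, ζ i < m → hE n ζ F 0 = 0 := by
    intro ζ hζ
    have h' : (∑ i, (ζ i : ℤ)) ≤ M := by
      have : ((∑ i, ζ i : ℕ) : ℤ) < m := by exact_mod_cast hζ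
      push_cast at this
      omega
    have := hμ ζ h'
    rw [← hFTS_eq, hDop, _root_.smul_apply, smul_eq_mul] at this
    rcases mul_eq_zero.1 this with h | h
    · exact absurd h (pow_ne_zero _ (neg_ne_zero.2 I_ne_zero))
    · exact h
  -- the function whose seminorm is estimated
  set H : SchwartzMap (RV n) ℂ := (-I) ^ (∑ i, β i) • hE n β S with hH
  have hHF : hFTS n H = hMulS n (hC n a t ht F) G := by
    ext ξ
    rw [hMulS_apply, hG, hV, hH, hFTS_smul, hFTS_smul, _root_.smul_apply, _root_.smul_apply,
      hFTS_Emul n β (hC n a t ht F) S ν (fun ξ => by rw [hSF, hF]), smul_eq_mul, smul_eq_mul]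
    ring
  set K : ℝ≥0∞ := ENNReal.ofReal ((n : ℝ) ^ m) * ENNReal.ofReal (t ^ ((m : ℝ) * ⨅ i, a i)) * Ps
    with hK
  have hterm : ∀ p ∈ L, ∫⁻ ξ, ‖hMulS n (hE n p.1 (hC n a t ht F)) (hE n p.2 G) ξ‖ₑ ≤ K * Q := by
    intro p hp
    have hpα := hL1 p hp
    have hle1 : p.1 ≤ α := by rw [← hpα]; exact le_self_add
    have hle2 : p.2 ≤ α := by rw [← hpα]; exact le_add_self
    have hpt : ∀ ξ : RV n, ‖hMulS n (hE n p.1 (hC n a t ht F)) (hE n p.2 G) ξ‖ₑ ≤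
        K * (ENNReal.ofReal ((1 + ∑ i, (ξ i) ^ 2) ^ ((m : ℝ) / 2)) * ‖hE n p.2 G ξ‖ₑ) := by
      intro ξ
      rw [hMulS_apply, enorm_mul, ← mul_assoc]
      gcongr
      have hpw := hPointwise n hn a ha t ht ht1 m F Ps.toReal p.1 hmom
        (fun ζ hζ => hPle ζ (Or.inl (by exact_mod_cast hζ))) (hPle p.1 (Or.inr hle1)) ξ
      rw [← ofReal_norm]
      refine (ENNReal.ofReal_le_ofReal hpw).trans (le_of_eq ?_)
      have hs : 0 ≤ t ^ ((m : ℝ) * ⨅ i, a i) := (Real.rpow_pos_of_pos ht _).le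
      rw [hK, ENNReal.ofReal_mul (by positivity), ENNReal.ofReal_mul (by positivity),
        ENNReal.ofReal_mul (by positivity), ENNReal.ofReal_toReal hPtop]
    refine (lintegral_mono hpt).trans ?_
    rw [lintegral_const_mul, ← hQ]
    · gcongr
      exact le_iSup (fun γ : {γ : Fin n → ℕ // γ ≤ α} => qSemiE n m γ.1 G) ⟨p.2, hle2⟩
    · refine Measurable.mul (f := fun ξ : RV n => ENNReal.ofReal ((1 + ∑ i, (ξ i) ^ 2) ^ ((m : ℝ) / 2)))
        (g := fun ξ => ‖hE n p.2 G ξ‖ₑ) ?_ ?_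
      · apply Measurable.ennreal_ofReal
        apply Measurable.pow_const
        fun_prop
      · exact (hE n p.2 G).continuous.measurable.enorm
  have hint := hListInt n L (fun p => hMulS n (hE n p.1 (hC n a t ht F)) (hE n p.2 G)) (K * Q) hterm
  rw [← hL2] at hint
  have hfinal : pSemiE n α β S ≤ c * (L.length * (K * Q)) := by
    unfold pSemiE
    apply iSup_le
    intro x
    rw [hDop, ← hH]
    obtain ⟨g, hg1, hg2⟩ := hXpow n α H
    have e : (‖((∏ i, x i ^ α i : ℝ) : ℂ) * H x‖₊ : ℝ≥0∞) = ‖g x‖ₑ := by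
      rw [← ofReal_norm, hg2 x, ofReal_norm]
      rfl
    rw [e]
    refine (hc g x).trans ?_
    rw [hg1, hHF]
    gcongr
  refine hfinal.trans ?_
  have hCc : (c : ℝ≥0∞) * L.length * ENNReal.ofReal ((n : ℝ) ^ m) ≤
      ENNReal.ofReal ((c * L.length * (n : ℝ) ^ m) + 1) := by
    refine le_trans (le_of_eq ?_) (ENNReal.ofReal_le_ofReal (le_add_of_nonneg_right zero_le_one))
    rw [ENNReal.ofReal_mul (by positivity), ENNReal.ofReal_mul (by positivity),
      ENNReal.ofReal_coe_nnreal, ENNReal.ofReal_natCast]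
  calc (c : ℝ≥0∞) * (L.length * (K * Q)) = (c * L.length * ENNReal.ofReal ((n : ℝ) ^ m)) *
        ENNReal.ofReal (t ^ ((m : ℝ) * ⨅ i, a i)) * Ps * Q := by rw [hK]; ring
    _ ≤ _ := by gcongr
end
end
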